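/- Let d ≥ 2 and let b : ℤ³ → ℂ be symmetric in its three arguments with |b(n₁,n₂,n₃)| ≤ C min(|n₁n₂|, |n₂n₃|, |n₁n₃|) for all (n₁,n₂,n₃) ∈ ℤ³ and some C > 0. Then the bilinear operator 𝓑 is symmetric (𝓑(u,w) = 𝓑(w,u)), satisfies the Leibniz rule ∂_θ 𝓑(u,w) = 𝓑(∂_θ u, w) + 𝓑(u, ∂_θ w) (and hence at every order of θ-differentiation), and for every integer m₁ > d/2 + 2 there exists a constant C' such that for all real-valued Schwartz-class functions u, w on ℝ^{d−1} × 𝕋: |∫_{ℝ^{d−1}×𝕋} u · 𝓗(𝓑(u,w)) dy dθ| ≤ C' ‖w‖_{H^{m₁}} ‖u‖²_{L²}. -/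

import Mathlib

open MeasureTheory

noncomputable section

/-- `n`-fold directional derivative in the direction `v`. -/
def dIter {E F : Type*} [NormedAddCommGroup E] [NormedSpace ℝ E]
    [NormedAddCommGroup F] [NormedSpace ℝ F] (v : E) : ℕ → (E → F) → E → F
  | 0, f => f
  | n + 1, f => fun x => fderiv ℝ (dIter v n f) x v

/-- Total degree of a multi-index. -/
def mdeg {m : ℕ} (β : Fin m → ℕ) : ℕ := ∑ i, β i

/-- The `n`-th Fourier coefficient in `θ` of a `2π`-periodic function. -/
def fCoeff {m : ℕ} (w : (Fin m → ℝ) × ℝ → ℂ) (y : Fin m → ℝ) (n : ℤ) : ℂ :=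
  (1 / (2 * (Real.pi : ℂ))) *
    ∫ θ in (0 : ℝ)..(2 * Real.pi), w (y, θ) * Complex.exp (-Complex.I * (n : ℂ) * (θ : ℂ))

/-- The Hilbert transform in `θ`: `(𝓗u)^(y,n) = −i sgn(n) û(y,n)`. -/
def Hil {m : ℕ} (w : (Fin m → ℝ) × ℝ → ℂ) : (Fin m → ℝ) × ℝ → ℂ :=
  fun p => ∑' n : ℤ, (-Complex.I * ((n.sign : ℤ) : ℂ)) * fCoeff w p.1 n *
    Complex.exp (Complex.I * (n : ℂ) * (p.2 : ℂ))

/-- The bilinear Fourier multiplier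
`(𝓑(u,w))^(y,n) = −(1/(4πc₀)) Σ_{n'} b(−n, n−n', n') û(y,n−n') ŵ(y,n')`. -/
def Bil {m : ℕ} (c₀ : ℂ) (b : ℤ → ℤ → ℤ → ℂ) (u w : (Fin m → ℝ) × ℝ → ℂ) :
    (Fin m → ℝ) × ℝ → ℂ :=
  fun p => ∑' n : ℤ,
    (-(1 / (4 * (Real.pi : ℂ) * c₀)) *
        ∑' n' : ℤ, b (-n) (n - n') n' * fCoeff u p.1 (n - n') * fCoeff w p.1 n') *
      Complex.exp (Complex.I * (n : ℂ) * (p.2 : ℂ))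

/-- The fundamental domain `ℝ^{d−1} × (0,2π)` for `ℝ^{d−1} × 𝕋`. -/
def strip (m : ℕ) : Set ((Fin m → ℝ) × ℝ) := {p | p.2 ∈ Set.Ioo 0 (2 * Real.pi)}

/-- The squared `L²(ℝ^{d−1} × 𝕋)` norm. -/
def sqL2 {m : ℕ} (w : (Fin m → ℝ) × ℝ → ℂ) : ℝ := ∫ p in strip m, ‖w p‖ ^ 2

/-- The derivative `∂_y^α ∂_θ^j`. -/
def spThDeriv {m : ℕ} (α : Fin m → ℕ) (j : ℕ) (w : (Fin m → ℝ) × ℝ → ℂ) :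
    (Fin m → ℝ) × ℝ → ℂ :=
  dIter ((0 : Fin m → ℝ), (1 : ℝ)) j <|
    ((List.finRange m).map fun i =>
      dIter (Pi.single i (1 : ℝ), (0 : ℝ)) (α i)).foldr (fun op h => op h) w

/-- The squared Sobolev norm `‖w‖²_{H^s(ℝ^{d−1}×𝕋)} = Σ_{|α|≤s} ‖∂^α w‖²_{L²}`. -/
def sqHm {m : ℕ} (s : ℕ) (w : (Fin m → ℝ) × ℝ → ℂ) : ℝ :=
  ∑' q : {q : (Fin m → ℕ) × ℕ // mdeg q.1 + q.2 ≤ s}, sqL2 (spThDeriv q.1.1 q.1.2 w)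

/-- `2π`-periodicity in `θ`. -/
def Periodic2pi {m : ℕ} (w : (Fin m → ℝ) × ℝ → ℂ) : Prop :=
  ∀ y θ, w (y, θ + 2 * Real.pi) = w (y, θ)

/-- Real-valuedness. -/
def RealValued {m : ℕ} (w : (Fin m → ℝ) × ℝ → ℂ) : Prop := ∀ p, (w p).im = 0

/-- Schwartz-type decay in `y` of all derivatives. -/
def SchwartzDecay {m : ℕ} (w : (Fin m → ℝ) × ℝ → ℂ) : Prop :=
  ∀ (qn : ℕ) (α : Fin m → ℕ) (j : ℕ), ∃ Cq : ℝ, ∀ p : (Fin m → ℝ) × ℝ,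
    (1 + ‖p.1‖) ^ qn * ‖spThDeriv α j w p‖ ≤ Cq

/-- The kernel bound `|b(n₁,n₂,n₃)| ≤ C min(|n₁n₂|, |n₂n₃|, |n₁n₃|)`. -/
def KernelBound (b : ℤ → ℤ → ℤ → ℂ) (C : ℝ) : Prop :=
  ∀ n₁ n₂ n₃ : ℤ, ‖b n₁ n₂ n₃‖ ≤
    C * min (min |((n₁ * n₂ : ℤ) : ℝ)| |((n₂ * n₃ : ℤ) : ℝ)|) |((n₁ * n₃ : ℤ) : ℝ)|

/-- Symmetry of the kernel `b` in its three arguments. -/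
def KernelSymm (b : ℤ → ℤ → ℤ → ℂ) : Prop :=
  ∀ n₁ n₂ n₃ : ℤ, b n₁ n₂ n₃ = b n₂ n₁ n₃ ∧ b n₁ n₂ n₃ = b n₁ n₃ n₂

/-!
Write `a` and `c` for the sequences of Fourier coefficients of `u` and `w` on the fibre over `y`.
Up to a constant, `∫ u 𝓗(𝓑(u, w)) dθ` is the trilinear form `∑ sgn(k + l) b(-(k + l), k, l) a(k)
c(l) a(-(k + l))`. Exchanging `k` and `-(k + l)` fixes everything but the sign, so the sign may be
replaced by half of `sgn(k + l) - sgn k`. This vanishes unless `k` and `k + l` have opposite signs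
(or one of them is zero), and then `|k (k + l)| ≤ l²`: the derivatives in the kernel all fall on
`w`, and Cauchy–Schwarz and Parseval bound the form by `∑ l² |c(l)|` times the energy of `u` on
the fibre.

It remains to bound `∑ l² |ŵ(y, l)|` uniformly in `y`. Averaging the Taylor expansion of `ŵ(·, l)`
at `y` over a ball of radius `|l|⁻¹`, at which scale one derivative in `y` weighs as much as one
in `θ`, gives `|l|^(2s - m) |ŵ(y, l)|² ≲ ‖w_l‖²_{H^s}` for the `l`-th mode `w_l` of `w`, where `m
= d - 1`. The series then converges by Cauchy–Schwarz as soon as `2s - m ≥ 6`, which for integers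
is `s > d/2 + 2`.
-/

/-! ### Iterated directional derivatives -/

section DirectionalDerivatives

variable {E F : Type*} [NormedAddCommGroup E] [NormedSpace ℝ E]
  [NormedAddCommGroup F] [NormedSpace ℝ F] {f : E → F}

lemma contDiff_fderiv_apply_const (hf : ContDiff ℝ (⊤ : ℕ∞) f) (v : E) :
    ContDiff ℝ (⊤ : ℕ∞) fun x => fderiv ℝ f x v :=
  (hf.fderiv_right (m := (⊤ : ℕ∞)) (by simp)).clm_apply contDiff_const

lemma contDiff_dIter (hf : ContDiff ℝ (⊤ : ℕ∞) f) (v : E) (k : ℕ) :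
    ContDiff ℝ (⊤ : ℕ∞) (dIter v k f) := by
  induction k with
  | zero => exact hf
  | succ k ih => exact contDiff_fderiv_apply_const ih v

lemma fderiv_fderiv_apply_comm (hf : ContDiff ℝ (⊤ : ℕ∞) f) (v v' x : E) :
    fderiv ℝ (fun q => fderiv ℝ f q v) x v' = fderiv ℝ (fun q => fderiv ℝ f q v') x v := by
  have hdiff : DifferentiableAt ℝ (fderiv ℝ f) x :=
    ((hf.fderiv_right (m := (⊤ : ℕ∞)) (by simp)).differentiable (by simp)) x
  have hsymm : IsSymmSndFDerivAt ℝ f x :=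
    hf.contDiffAt.isSymmSndFDerivAt <| by
      rw [minSmoothness_of_isRCLikeNormedField]
      exact WithTop.coe_le_coe.2 (le_top : (2 : ℕ∞) ≤ ⊤)
  have happly (a b : E) : fderiv ℝ (fun q => fderiv ℝ f q a) x b
      = fderiv ℝ (fderiv ℝ f) x b a := by
    simp [fderiv_clm_apply hdiff (differentiableAt_const a)]
  rw [happly, happly, hsymm.eq]

lemma dIter_fderiv_apply (hf : ContDiff ℝ (⊤ : ℕ∞) f) (v v' : E) (k : ℕ) :
    dIter v k (fun q => fderiv ℝ f q v') = fun q => fderiv ℝ (dIter v k f) q v' := by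
  induction k with
  | zero => rfl
  | succ k ih =>
    funext x
    simp only [dIter, ih]
    exact fderiv_fderiv_apply_comm (contDiff_dIter hf v k) v' v x

lemma dIter_succ' (v : E) (k : ℕ) : dIter v (k + 1) f = dIter v k fun q => fderiv ℝ f q v := by
  induction k with
  | zero => rfl
  | succ k ih => funext x; rw [dIter, ih]; rfl

lemma dIter_sum_smul {ι : Type*} (s : Finset ι) (c : ι → ℝ) {g : ι → E → F}
    (hg : ∀ i, ContDiff ℝ (⊤ : ℕ∞) (g i)) (v : E) (k : ℕ) :
    dIter v k (fun x => ∑ i ∈ s, c i • g i x) = fun x => ∑ i ∈ s, c i • dIter v k (g i) x := by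
  induction k with
  | zero => rfl
  | succ k ih =>
    funext x
    have hdiff (i : ι) : DifferentiableAt ℝ (dIter v k (g i)) x :=
      (contDiff_dIter (hg i) v k).differentiable (by simp) x
    simp only [dIter, ih]
    rw [fderiv_fun_sum fun i _ => (hdiff i).fun_const_smul (c i)]
    simp [fderiv_fun_const_smul (hdiff _)]

end DirectionalDerivatives

section Periodicity

variable {m : ℕ} {g : (Fin m → ℝ) × ℝ → ℂ}

lemma Periodic2pi.fderiv_apply (hg : Periodic2pi g) (v : (Fin m → ℝ) × ℝ) :
    Periodic2pi fun q => fderiv ℝ g q v := by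
  intro y θ
  have htranslate : (fun q => g (q + (0, 2 * Real.pi))) = g := by
    funext q
    simpa [Prod.add_def] using hg q.1 q.2
  have hfderiv := fderiv_comp_add_right (𝕜 := ℝ) (f := g) (x := (y, θ)) (0, 2 * Real.pi)
  simp only [htranslate, Prod.mk_add_mk, add_zero] at hfderiv
  simp only [hfderiv]

lemma Periodic2pi.dIter (hg : Periodic2pi g) (v : (Fin m → ℝ) × ℝ) (k : ℕ) :
    Periodic2pi (dIter v k g) := by
  induction k with
  | zero => exact hg
  | succ k ih => exact ih.fderiv_apply v

end Periodicity

/-! ### Fourier coefficients and Fourier modes -/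

section Characters

/-- The character `θ ↦ e^{inθ}` of the circle `ℝ / 2πℤ`. -/
def character (n : ℤ) (θ : ℝ) : ℂ := Complex.exp (Complex.I * (n : ℂ) * (θ : ℂ))

lemma character_zero_right (n : ℤ) : character n 0 = 1 := by simp [character]

lemma character_add_left (n k : ℤ) (θ : ℝ) :
    character (n + k) θ = character n θ * character k θ := by
  rw [character, character, character, ← Complex.exp_add]
  congr 1
  push_cast
  ring

lemma character_add_right (n : ℤ) (θ φ : ℝ) :
    character n (θ + φ) = character n θ * character n φ := by
  rw [character, character, character, ← Complex.exp_add]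
  congr 1
  push_cast
  ring

lemma character_neg_mul_self (n : ℤ) (θ : ℝ) : character (-n) θ * character n θ = 1 := by
  rw [← character_add_left, neg_add_cancel]
  simp [character]

lemma character_periodic (n : ℤ) : Function.Periodic (character n) (2 * Real.pi) := by
  intro θ
  have hperiod : character n (2 * Real.pi) = 1 := by
    rw [← Complex.exp_int_mul_two_pi_mul_I n, character]
    congr 1
    push_cast
    ring
  rw [character_add_right, hperiod, mul_one]

lemma norm_character (n : ℤ) (θ : ℝ) : ‖character n θ‖ = 1 := by
  have harg : Complex.I * (n : ℂ) * (θ : ℂ) = ((n * θ : ℝ) : ℂ) * Complex.I := by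
    push_cast
    ring
  rw [character, harg, Complex.norm_exp_ofReal_mul_I]

@[fun_prop]
lemma continuous_character (n : ℤ) : Continuous (character n) := by
  unfold character
  fun_prop

lemma integral_character (n : ℤ) :
    ∫ θ in (0 : ℝ)..2 * Real.pi, character n θ = if n = 0 then 2 * (Real.pi : ℂ) else 0 := by
  split_ifs with hn
  · simp [hn, character]
  · have hperiod := (character_periodic n).eq
    rw [character_zero_right, character] at hperiod
    have hne : Complex.I * (n : ℂ) ≠ 0 := mul_ne_zero Complex.I_ne_zero (by exact_mod_cast hn)
    simp only [character]
    rw [integral_exp_mul_complex hne, hperiod]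
    simp

lemma hasDerivAt_character_zero (n : ℤ) : HasDerivAt (character n) (Complex.I * n) 0 := by
  unfold character
  simpa using ((Complex.ofRealCLM.hasDerivAt (x := 0)).const_mul (Complex.I * (n : ℂ))).cexp

end Characters

lemma hasFDerivAt_intervalIntegral_of_continuous {E F : Type*} [NormedAddCommGroup E]
    [NormedSpace ℝ E] [ProperSpace E] [NormedAddCommGroup F] [NormedSpace ℝ F]
    {f : E → ℝ → F} {f' : E → ℝ → E →L[ℝ] F} (hf : ∀ x, Continuous (f x))
    (hf' : Continuous (Function.uncurry f')) (h : ∀ x t, HasFDerivAt (f · t) (f' x t) x)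
    (a b : ℝ) (x₀ : E) :
    HasFDerivAt (fun x => ∫ t in a..b, f x t) (∫ t in a..b, f' x₀ t) x₀ := by
  obtain ⟨K, hK⟩ := ((isCompact_closedBall x₀ 1).prod
    (isCompact_uIcc (a := a) (b := b))).exists_bound_of_continuousOn hf'.continuousOn
  refine intervalIntegral.hasFDerivAt_integral_of_dominated_of_fderiv_le (bound := fun _ => K)
    (Metric.closedBall_mem_nhds x₀ one_pos)
    (Filter.Eventually.of_forall fun x => (hf x).aestronglyMeasurable)
    ((hf x₀).intervalIntegrable _ _) (hf'.uncurry_left x₀).aestronglyMeasurable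
    (Filter.Eventually.of_forall fun t ht x hx => hK (x, t) ⟨hx, Set.uIoc_subset_uIcc ht⟩)
    intervalIntegrable_const (Filter.Eventually.of_forall fun t _ x _ => h x t)

section FourierModes

variable {m : ℕ} {g : (Fin m → ℝ) × ℝ → ℂ}

lemma fCoeff_eq_integral_character (g : (Fin m → ℝ) × ℝ → ℂ) (y : Fin m → ℝ) (n : ℤ) :
    fCoeff g y n =
      (1 / (2 * (Real.pi : ℂ))) * ∫ θ in (0 : ℝ)..2 * Real.pi, g (y, θ) * character (-n) θ := by
  simp [fCoeff, character]

lemma norm_fCoeff_le {y : Fin m → ℝ} {K : ℝ}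
    (hK : ∀ θ ∈ Set.Icc 0 (2 * Real.pi), ‖g (y, θ)‖ ≤ K) (n : ℤ) : ‖fCoeff g y n‖ ≤ K := by
  have hint : ‖∫ θ in (0 : ℝ)..2 * Real.pi, g (y, θ) * character (-n) θ‖
      ≤ K * |2 * Real.pi - 0| :=
    intervalIntegral.norm_integral_le_of_norm_le_const fun θ hθ => by
      rw [Set.uIoc_of_le Real.two_pi_pos.le] at hθ
      simpa [norm_character] using hK θ (Set.Ioc_subset_Icc_self hθ)
  have hpi := Real.pi_pos
  rw [sub_zero, abs_of_pos (by positivity)] at hint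
  rw [fCoeff_eq_integral_character, norm_mul]
  calc ‖1 / (2 * (Real.pi : ℂ))‖ * _ ≤ 1 / (2 * Real.pi) * (K * (2 * Real.pi)) := by
        gcongr
        simp [abs_of_pos hpi]
    _ = K := by field_simp

lemma continuous_fCoeff (hg : Continuous g) (n : ℤ) : Continuous fun y => fCoeff g y n := by
  simp only [fCoeff_eq_integral_character]
  refine continuous_const.mul
    (intervalIntegral.continuous_parametric_intervalIntegral_of_continuous' ?_ _ _)
  fun_prop

lemma fCoeff_sum_smul {ι : Type*} (s : Finset ι) (c : ι → ℝ) {f : ι → (Fin m → ℝ) × ℝ → ℂ}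
    (hf : ∀ i, Continuous (f i)) (y : Fin m → ℝ) (n : ℤ) :
    fCoeff (fun q => ∑ i ∈ s, c i • f i q) y n = ∑ i ∈ s, c i • fCoeff (f i) y n := by
  simp only [fCoeff_eq_integral_character, Finset.sum_mul, smul_mul_assoc]
  rw [intervalIntegral.integral_finsetSum fun i _ =>
    Continuous.intervalIntegrable (by fun_prop) _ _, Finset.mul_sum]
  simp only [intervalIntegral.integral_smul, mul_smul_comm]

/-- The `n`-th Fourier mode `(y, θ) ↦ ĝ(y, n) e^{inθ}` of `g`, as a function on the same space as
`g`, so that partial derivatives of `g` in all variables act on it. -/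
def fourierMode (g : (Fin m → ℝ) × ℝ → ℂ) (n : ℤ) (p : (Fin m → ℝ) × ℝ) : ℂ :=
  fCoeff g p.1 n * character n p.2

lemma norm_fourierMode (g : (Fin m → ℝ) × ℝ → ℂ) (n : ℤ) (p : (Fin m → ℝ) × ℝ) :
    ‖fourierMode g n p‖ = ‖fCoeff g p.1 n‖ := by
  rw [fourierMode, norm_mul, norm_character, mul_one]

lemma fourierMode_apply_zero (g : (Fin m → ℝ) × ℝ → ℂ) (n : ℤ) (y : Fin m → ℝ) :
    fourierMode g n (y, 0) = fCoeff g y n := by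
  rw [fourierMode, character_zero_right, mul_one]

lemma fourierMode_eq_integral_translate (hg : Periodic2pi g) (n : ℤ) (p : (Fin m → ℝ) × ℝ) :
    fourierMode g n p = (1 / (2 * (Real.pi : ℂ))) *
      ∫ φ in (0 : ℝ)..2 * Real.pi, g (p + (0, φ)) * character (-n) φ := by
  set F : ℝ → ℂ := fun φ => g (p.1, φ) * character (-n) φ * character n p.2 with hF
  have hper : Function.Periodic F (2 * Real.pi) := fun φ => by
    simp only [hF, hg p.1 φ, character_periodic (-n) φ]
  have hshift (φ : ℝ) : F (p.2 + φ) = g (p + (0, φ)) * character (-n) φ := by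
    have hpoint : p + (0, φ) = (p.1, p.2 + φ) := by simp [Prod.add_def]
    rw [hpoint, hF, ← mul_one (character (-n) φ), ← character_neg_mul_self n p.2]
    simp only [character_add_right]
    ring
  have htranslate := intervalIntegral.integral_comp_add_left F p.2 (a := 0) (b := 2 * Real.pi)
  rw [add_zero, hper.intervalIntegral_add_eq p.2 0, zero_add] at htranslate
  simp only [hshift] at htranslate
  rw [htranslate, fourierMode, fCoeff_eq_integral_character, mul_assoc]
  simp only [hF, intervalIntegral.integral_mul_const]

lemma hasFDerivAt_fourierMode (hg : ContDiff ℝ (⊤ : ℕ∞) g) (hper : Periodic2pi g) (n : ℤ)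
    (p : (Fin m → ℝ) × ℝ) :
    HasFDerivAt (fourierMode g n) ((1 / (2 * (Real.pi : ℂ))) •
      ∫ φ in (0 : ℝ)..2 * Real.pi, character (-n) φ • fderiv ℝ g (p + (0, φ))) p := by
  have hfderiv : Continuous (fderiv ℝ g) := hg.continuous_fderiv (by simp)
  have hderiv (q : (Fin m → ℝ) × ℝ) (φ : ℝ) :
      HasFDerivAt (fun q => g (q + (0, φ)) * character (-n) φ)
        (character (-n) φ • fderiv ℝ g (q + (0, φ))) q :=
    ((hasFDerivAt_comp_add_right (0, φ)).2 (hg.differentiable (by simp) _).hasFDerivAt).mul_const _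
  have hcont := hg.continuous
  rw [funext (fourierMode_eq_integral_translate hper n)]
  exact (hasFDerivAt_intervalIntegral_of_continuous (by fun_prop) (by fun_prop) hderiv
    0 (2 * Real.pi) p).const_mul _

lemma differentiable_fourierMode (hg : ContDiff ℝ (⊤ : ℕ∞) g) (hper : Periodic2pi g) (n : ℤ) :
    Differentiable ℝ (fourierMode g n) :=
  fun p => (hasFDerivAt_fourierMode hg hper n p).differentiableAt

lemma fderiv_fourierMode_apply (hg : ContDiff ℝ (⊤ : ℕ∞) g) (hper : Periodic2pi g) (n : ℤ)
    (p v : (Fin m → ℝ) × ℝ) :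
    fderiv ℝ (fourierMode g n) p v = fourierMode (fun q => fderiv ℝ g q v) n p := by
  have hfderiv : Continuous (fderiv ℝ g) := hg.continuous_fderiv (by simp)
  rw [(hasFDerivAt_fourierMode hg hper n p).fderiv,
    fourierMode_eq_integral_translate (hper.fderiv_apply v), smul_apply, smul_eq_mul,
    ContinuousLinearMap.intervalIntegral_apply
      (Continuous.intervalIntegrable (by fun_prop) _ _)]
  simp only [smul_apply, smul_eq_mul, mul_comm]

lemma fCoeff_fderiv_theta (hg : ContDiff ℝ (⊤ : ℕ∞) g) (hper : Periodic2pi g) (y : Fin m → ℝ)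
    (n : ℤ) : fCoeff (fun q => fderiv ℝ g q (0, 1)) y n = Complex.I * n * fCoeff g y n := by
  have hline : HasDerivAt (fun θ : ℝ => (y, θ)) (0, 1) (0 : ℝ) :=
    (hasDerivAt_const 0 y).prodMk (hasDerivAt_id 0)
  have hmode := (differentiable_fourierMode hg hper n (y, 0)).hasFDerivAt.comp_hasDerivAt 0 hline
  have hchar : HasDerivAt (fun θ => fourierMode g n (y, θ)) (fCoeff g y n * (Complex.I * n)) 0 :=
    (hasDerivAt_character_zero n).const_mul (fCoeff g y n)
  rw [← fourierMode_apply_zero, ← fderiv_fourierMode_apply hg hper, mul_comm,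
    ← hchar.unique hmode]

lemma fCoeff_dIter_theta (hg : ContDiff ℝ (⊤ : ℕ∞) g) (hper : Periodic2pi g) (y : Fin m → ℝ)
    (n : ℤ) (k : ℕ) :
    fCoeff (dIter (0, 1) k g) y n = (Complex.I * n) ^ k * fCoeff g y n := by
  induction k with
  | zero => simp [dIter]
  | succ k ih =>
    rw [dIter, fCoeff_fderiv_theta (contDiff_dIter hg _ k) (hper.dIter _ k), ih, pow_succ']
    ring

lemma hasFDerivAt_fCoeff (hg : ContDiff ℝ (⊤ : ℕ∞) g) (hper : Periodic2pi g) (y : Fin m → ℝ)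
    (n : ℤ) :
    HasFDerivAt (fun x => fCoeff g x n)
      ((fderiv ℝ (fourierMode g n) (y, 0)).comp (ContinuousLinearMap.inl ℝ _ ℝ)) y := by
  have hcomp := HasFDerivAt.comp (f := fun x => (x, (0 : ℝ))) y
    (differentiable_fourierMode hg hper n (y, 0)).hasFDerivAt (hasFDerivAt_prodMk_left y 0)
  simpa only [Function.comp_def, fourierMode_apply_zero] using hcomp

lemma fderiv_fCoeff_apply (hg : ContDiff ℝ (⊤ : ℕ∞) g) (hper : Periodic2pi g)
    (y v : Fin m → ℝ) (n : ℤ) :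
    fderiv ℝ (fun x => fCoeff g x n) y v = fCoeff (fun q => fderiv ℝ g q (v, 0)) y n := by
  rw [(hasFDerivAt_fCoeff hg hper y n).fderiv, ← fourierMode_apply_zero,
    ← fderiv_fourierMode_apply hg hper]
  rfl

lemma dIter_fCoeff (hg : ContDiff ℝ (⊤ : ℕ∞) g) (hper : Periodic2pi g) (v : Fin m → ℝ) (n : ℤ)
    (k : ℕ) : dIter v k (fun y => fCoeff g y n) = fun y => fCoeff (dIter (v, 0) k g) y n := by
  induction k with
  | zero => rfl
  | succ k ih =>
    funext y
    simp only [dIter, ih]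
    exact fderiv_fCoeff_apply (contDiff_dIter hg _ k) (hper.dIter _ k) y v n

lemma differentiable_dIter_fCoeff (hg : ContDiff ℝ (⊤ : ℕ∞) g) (hper : Periodic2pi g)
    (v : Fin m → ℝ) (n : ℤ) (k : ℕ) : Differentiable ℝ (dIter v k fun y => fCoeff g y n) := by
  rw [dIter_fCoeff hg hper]
  exact fun y => (hasFDerivAt_fCoeff (contDiff_dIter hg _ k) (hper.dIter _ k) y n).differentiableAt

end FourierModes

/-! ### Decay of Fourier coefficients -/

section Decay

/-- The weight `1 + |n|` on frequencies, in terms of which decay is measured. -/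
def weight (n : ℤ) : ℝ := 1 + |(n : ℝ)|

lemma weight_pos (n : ℤ) : 0 < weight n := by unfold weight; positivity

lemma summable_inv_weight_sq : Summable fun n : ℤ => (weight n ^ 2)⁻¹ := by
  have hnat : Summable fun n : ℕ => (((n : ℝ) + 1) ^ 2)⁻¹ := by
    simpa using (summable_nat_add_iff 1).2 (Real.summable_nat_pow_inv.2 one_lt_two)
  exact Summable.of_nat_of_neg (hnat.congr fun n => by simp [weight, add_comm])
    (hnat.congr fun n => by simp [weight, add_comm])

lemma summable_inv_weight_sq_mul :
    Summable fun q : ℤ × ℤ => (weight q.1 ^ 2)⁻¹ * (weight q.2 ^ 2)⁻¹ :=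
  summable_inv_weight_sq.mul_of_nonneg summable_inv_weight_sq
    (fun _ => by positivity) (fun _ => by positivity)

variable {m : ℕ} {g : (Fin m → ℝ) × ℝ → ℂ}

lemma norm_fCoeff_le_div_weight_pow (hg : ContDiff ℝ (⊤ : ℕ∞) g) (hper : Periodic2pi g)
    {y : Fin m → ℝ} {K : ℝ} {k : ℕ} (h₀ : ∀ θ ∈ Set.Icc 0 (2 * Real.pi), ‖g (y, θ)‖ ≤ K)
    (hk : ∀ θ ∈ Set.Icc 0 (2 * Real.pi), ‖dIter (0, 1) k g (y, θ)‖ ≤ K) (n : ℤ) :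
    ‖fCoeff g y n‖ ≤ 2 ^ k * K / weight n ^ k := by
  have hcoeff := norm_fCoeff_le h₀ n
  have hK : 0 ≤ K := (norm_nonneg _).trans hcoeff
  rw [le_div_iff₀ (pow_pos (weight_pos n) k), weight]
  rcases eq_or_ne n 0 with rfl | hn
  · simpa using hcoeff.trans (le_mul_of_one_le_left hK (one_le_pow₀ one_le_two))
  · have hone : (1 : ℝ) ≤ |(n : ℝ)| := by exact_mod_cast Int.one_le_abs hn
    have hderiv := norm_fCoeff_le hk n
    rw [fCoeff_dIter_theta hg hper, norm_mul, norm_pow, norm_mul, Complex.norm_I, one_mul,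
      Complex.norm_intCast] at hderiv
    calc ‖fCoeff g y n‖ * (1 + |(n : ℝ)|) ^ k ≤ ‖fCoeff g y n‖ * (2 * |(n : ℝ)|) ^ k := by
          gcongr
          linarith
      _ = 2 ^ k * (|(n : ℝ)| ^ k * ‖fCoeff g y n‖) := by ring
      _ ≤ 2 ^ k * K := by gcongr

lemma exists_norm_fCoeff_le_of_isCompact (hg : ContDiff ℝ (⊤ : ℕ∞) g) (hper : Periodic2pi g)
    {S : Set (Fin m → ℝ)} (hS : IsCompact S) (k : ℕ) :
    ∃ K, ∀ y ∈ S, ∀ n, ‖fCoeff g y n‖ ≤ K / weight n ^ k := by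
  obtain ⟨K, hK⟩ := (hS.prod isCompact_Icc).exists_bound_of_continuousOn
    (hg.continuous.prodMk (contDiff_dIter hg (0, 1) k).continuous).continuousOn
  exact ⟨2 ^ k * K, fun y hy => norm_fCoeff_le_div_weight_pow hg hper
    (fun θ hθ => (norm_fst_le _).trans (hK (y, θ) ⟨hy, hθ⟩))
    (fun θ hθ => (norm_snd_le _).trans (hK (y, θ) ⟨hy, hθ⟩))⟩

lemma exists_norm_fderiv_fourierMode_le_of_isCompact (hg : ContDiff ℝ (⊤ : ℕ∞) g)
    (hper : Periodic2pi g) {S : Set (Fin m → ℝ)} (hS : IsCompact S) (k : ℕ) :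
    ∃ K, ∀ p : (Fin m → ℝ) × ℝ, p.1 ∈ S → ∀ n, ‖fderiv ℝ (fourierMode g n) p‖ ≤
      K / weight n ^ k := by
  have hk := contDiff_dIter hg (0, 1) k
  obtain ⟨K, hK⟩ := (hS.prod isCompact_Icc).exists_bound_of_continuousOn
    ((hg.continuous_fderiv (by simp)).prodMk (hk.continuous_fderiv (by simp))).continuousOn
  have hbound (p : (Fin m → ℝ) × ℝ) (hp : p.1 ∈ S) (n : ℤ) (v : (Fin m → ℝ) × ℝ) :
      ‖fderiv ℝ (fourierMode g n) p v‖ ≤ 2 ^ k * (K * ‖v‖) / weight n ^ k := by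
    rw [fderiv_fourierMode_apply hg hper, norm_fourierMode]
    refine norm_fCoeff_le_div_weight_pow (contDiff_fderiv_apply_const hg v)
      (hper.fderiv_apply v) (fun θ hθ => ?_) (fun θ hθ => ?_) n
    · exact ContinuousLinearMap.le_of_opNorm_le _
        ((norm_fst_le _).trans (hK (p.1, θ) ⟨hp, hθ⟩)) v
    · rw [dIter_fderiv_apply hg]
      exact ContinuousLinearMap.le_of_opNorm_le _
        ((norm_snd_le _).trans (hK (p.1, θ) ⟨hp, hθ⟩)) v
  refine ⟨2 ^ k * K, fun p hp n => ContinuousLinearMap.opNorm_le_bound _ ?_ fun v => ?_⟩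
  · have hK₀ : 0 ≤ K := (norm_nonneg _).trans (hK (p.1, 0) ⟨hp, by simp [Real.pi_nonneg]⟩)
    exact div_nonneg (by positivity) (pow_pos (weight_pos n) k).le
  · exact (hbound p hp n v).trans_eq (by ring)

lemma spThDeriv_zero (j : ℕ) (g : (Fin m → ℝ) × ℝ → ℂ) : spThDeriv 0 j g = dIter (0, 1) j g := by
  have hfold (l : List (Fin m)) :
      ((l.map fun i => dIter (F := ℂ) (Pi.single i (1 : ℝ), (0 : ℝ)) ((0 : Fin m → ℕ) i)).foldr
        (fun op h => op h) g) = g := by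
    induction l with
    | nil => rfl
    | cons i l ih => simpa [dIter] using ih
  rw [spThDeriv, hfold]

lemma SchwartzDecay.exists_norm_fCoeff_le (hdecay : SchwartzDecay g) (hg : ContDiff ℝ (⊤ : ℕ∞) g)
    (hper : Periodic2pi g) (k : ℕ) : ∃ K, ∀ y n, ‖fCoeff g y n‖ ≤ K / weight n ^ k := by
  obtain ⟨K₀, hK₀⟩ := hdecay 0 0 0
  obtain ⟨K, hK⟩ := hdecay 0 0 k
  simp only [spThDeriv_zero, pow_zero, one_mul, dIter] at hK₀ hK
  exact ⟨2 ^ k * max K₀ K, fun y => norm_fCoeff_le_div_weight_pow hg hper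
    (fun θ _ => (hK₀ _).trans (le_max_left _ _)) (fun θ _ => (hK _).trans (le_max_right _ _))⟩

end Decay

/-! ### Bilinear Fourier multipliers -/

section BilinearMultiplier

/-- The contribution of the pair of frequencies `q` to `bilinearMultiplier β u w`. -/
def multiplierTerm {m : ℕ} (β : ℤ → ℤ → ℂ) (u w : (Fin m → ℝ) × ℝ → ℂ) (q : ℤ × ℤ)
    (p : (Fin m → ℝ) × ℝ) : ℂ :=
  β q.1 q.2 * (fourierMode u q.1 p * fourierMode w q.2 p)

/-- The bilinear Fourier multiplier in `θ` with symbol `β`, written as a double series of products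
of Fourier modes. -/
def bilinearMultiplier {m : ℕ} (β : ℤ → ℤ → ℂ) (u w : (Fin m → ℝ) × ℝ → ℂ)
    (p : (Fin m → ℝ) × ℝ) : ℂ :=
  ∑' q : ℤ × ℤ, multiplierTerm β u w q p

/-- The symbol `β` grows at most linearly in each of the two frequencies. -/
def SymbolBound (β : ℤ → ℤ → ℂ) (C : ℝ) : Prop := ∀ k l, ‖β k l‖ ≤ C * (weight k * weight l)

variable {β : ℤ → ℤ → ℂ} {C : ℝ}

lemma SymbolBound.norm_mul_mul_le (hβ : SymbolBound β C) {A B x y : ℝ} {k l : ℤ}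
    (hx₀ : 0 ≤ x) (hy₀ : 0 ≤ y) (hx : x ≤ A / weight k ^ 3) (hy : y ≤ B / weight l ^ 3) :
    ‖β k l‖ * (x * y) ≤ C * A * B * ((weight k ^ 2)⁻¹ * (weight l ^ 2)⁻¹) := by
  have hk := weight_pos k
  have hl := weight_pos l
  have hC : 0 ≤ C * (weight k * weight l) := (norm_nonneg _).trans (hβ k l)
  calc ‖β k l‖ * (x * y)
      ≤ C * (weight k * weight l) * (A / weight k ^ 3 * (B / weight l ^ 3)) := by
        gcongr
        · exact hβ k l
        · exact hx₀.trans hx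
    _ = C * A * B * ((weight k ^ 2)⁻¹ * (weight l ^ 2)⁻¹) := by field_simp

variable {m : ℕ} {u w : (Fin m → ℝ) × ℝ → ℂ}

lemma norm_multiplierTerm (β : ℤ → ℤ → ℂ) (u w : (Fin m → ℝ) × ℝ → ℂ) (q : ℤ × ℤ)
    (p : (Fin m → ℝ) × ℝ) :
    ‖multiplierTerm β u w q p‖ = ‖β q.1 q.2‖ * (‖fCoeff u p.1 q.1‖ * ‖fCoeff w p.1 q.2‖) := by
  rw [multiplierTerm, norm_mul, norm_mul, norm_fourierMode, norm_fourierMode]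

lemma summable_norm_multiplierTerm (hβ : SymbolBound β C) (hu : ContDiff ℝ (⊤ : ℕ∞) u)
    (hw : ContDiff ℝ (⊤ : ℕ∞) w) (hup : Periodic2pi u) (hwp : Periodic2pi w)
    (p : (Fin m → ℝ) × ℝ) : Summable fun q => ‖multiplierTerm β u w q p‖ := by
  obtain ⟨A, hA⟩ := exists_norm_fCoeff_le_of_isCompact hu hup (isCompact_singleton (x := p.1)) 3
  obtain ⟨B, hB⟩ := exists_norm_fCoeff_le_of_isCompact hw hwp (isCompact_singleton (x := p.1)) 3
  refine Summable.of_nonneg_of_le (fun q => norm_nonneg _) (fun q => ?_)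
    (summable_inv_weight_sq_mul.mul_left (C * A * B))
  rw [norm_multiplierTerm]
  exact hβ.norm_mul_mul_le (norm_nonneg _) (norm_nonneg _) (hA _ rfl q.1) (hB _ rfl q.2)

lemma norm_bilinearMultiplier_le (hβ : SymbolBound β C) {A B : ℝ} {y : Fin m → ℝ}
    (hA : ∀ n, ‖fCoeff u y n‖ ≤ A / weight n ^ 3) (hB : ∀ n, ‖fCoeff w y n‖ ≤ B / weight n ^ 3)
    (θ : ℝ) : ‖bilinearMultiplier β u w (y, θ)‖ ≤
      C * A * B * ∑' q : ℤ × ℤ, (weight q.1 ^ 2)⁻¹ * (weight q.2 ^ 2)⁻¹ := by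
  rw [← tsum_mul_left]
  refine tsum_of_norm_bounded (summable_inv_weight_sq_mul.mul_left _).hasSum fun q => ?_
  rw [norm_multiplierTerm]
  exact hβ.norm_mul_mul_le (norm_nonneg _) (norm_nonneg _) (hA q.1) (hB q.2)

lemma hasFDerivAt_multiplierTerm (β : ℤ → ℤ → ℂ) (hu : ContDiff ℝ (⊤ : ℕ∞) u)
    (hw : ContDiff ℝ (⊤ : ℕ∞) w) (hup : Periodic2pi u) (hwp : Periodic2pi w) (q : ℤ × ℤ)
    (p : (Fin m → ℝ) × ℝ) :
    HasFDerivAt (multiplierTerm β u w q)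
      (β q.1 q.2 • (fourierMode u q.1 p • fderiv ℝ (fourierMode w q.2) p +
        fourierMode w q.2 p • fderiv ℝ (fourierMode u q.1) p)) p :=
  ((differentiable_fourierMode hu hup q.1 p).hasFDerivAt.mul
    (differentiable_fourierMode hw hwp q.2 p).hasFDerivAt).const_mul _

lemma fderiv_multiplierTerm_apply (β : ℤ → ℤ → ℂ) (hu : ContDiff ℝ (⊤ : ℕ∞) u)
    (hw : ContDiff ℝ (⊤ : ℕ∞) w) (hup : Periodic2pi u) (hwp : Periodic2pi w) (q : ℤ × ℤ)
    (p v : (Fin m → ℝ) × ℝ) :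
    fderiv ℝ (multiplierTerm β u w q) p v =
      multiplierTerm β (fun x => fderiv ℝ u x v) w q p +
        multiplierTerm β u (fun x => fderiv ℝ w x v) q p := by
  rw [(hasFDerivAt_multiplierTerm β hu hw hup hwp q p).fderiv]
  simp only [multiplierTerm, smul_apply, add_apply, smul_eq_mul,
    fderiv_fourierMode_apply hu hup, fderiv_fourierMode_apply hw hwp]
  ring

lemma norm_fderiv_multiplierTerm_le (β : ℤ → ℤ → ℂ) (hu : ContDiff ℝ (⊤ : ℕ∞) u)
    (hw : ContDiff ℝ (⊤ : ℕ∞) w) (hup : Periodic2pi u) (hwp : Periodic2pi w) (q : ℤ × ℤ)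
    (p : (Fin m → ℝ) × ℝ) :
    ‖fderiv ℝ (multiplierTerm β u w q) p‖ ≤
      ‖β q.1 q.2‖ * (‖fCoeff u p.1 q.1‖ * ‖fderiv ℝ (fourierMode w q.2) p‖) +
        ‖β q.1 q.2‖ * (‖fderiv ℝ (fourierMode u q.1) p‖ * ‖fCoeff w p.1 q.2‖) := by
  rw [(hasFDerivAt_multiplierTerm β hu hw hup hwp q p).fderiv, norm_smul, ← mul_add]
  gcongr
  refine (norm_add_le _ _).trans_eq ?_
  rw [norm_smul, norm_smul, norm_fourierMode, norm_fourierMode, mul_comm ‖fCoeff w _ _‖]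

lemma exists_norm_fderiv_multiplierTerm_le (hβ : SymbolBound β C) (hu : ContDiff ℝ (⊤ : ℕ∞) u)
    (hw : ContDiff ℝ (⊤ : ℕ∞) w) (hup : Periodic2pi u) (hwp : Periodic2pi w)
    (p : (Fin m → ℝ) × ℝ) :
    ∃ K, ∀ q, ∀ x ∈ Metric.ball p 1, ‖fderiv ℝ (multiplierTerm β u w q) x‖ ≤
      K * ((weight q.1 ^ 2)⁻¹ * (weight q.2 ^ 2)⁻¹) := by
  have hS := isCompact_closedBall p.1 1
  obtain ⟨A, hA⟩ := exists_norm_fCoeff_le_of_isCompact hu hup hS 3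
  obtain ⟨B, hB⟩ := exists_norm_fCoeff_le_of_isCompact hw hwp hS 3
  obtain ⟨A', hA'⟩ := exists_norm_fderiv_fourierMode_le_of_isCompact hu hup hS 3
  obtain ⟨B', hB'⟩ := exists_norm_fderiv_fourierMode_le_of_isCompact hw hwp hS 3
  refine ⟨C * A * B' + C * A' * B, fun q x hx => ?_⟩
  have hx₁ : x.1 ∈ Metric.closedBall p.1 1 :=
    (le_max_left (dist x.1 p.1) (dist x.2 p.2)).trans (Metric.mem_ball.1 hx).le
  refine (norm_fderiv_multiplierTerm_le β hu hw hup hwp q x).trans ?_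
  rw [add_mul]
  exact add_le_add
    (hβ.norm_mul_mul_le (norm_nonneg _) (norm_nonneg _) (hA _ hx₁ _) (hB' _ hx₁ _))
    (hβ.norm_mul_mul_le (norm_nonneg _) (norm_nonneg _) (hA' _ hx₁ _) (hB _ hx₁ _))

lemma summable_fderiv_multiplierTerm (hβ : SymbolBound β C) (hu : ContDiff ℝ (⊤ : ℕ∞) u)
    (hw : ContDiff ℝ (⊤ : ℕ∞) w) (hup : Periodic2pi u) (hwp : Periodic2pi w)
    (p : (Fin m → ℝ) × ℝ) : Summable fun q => fderiv ℝ (multiplierTerm β u w q) p := by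
  obtain ⟨K, hK⟩ := exists_norm_fderiv_multiplierTerm_le hβ hu hw hup hwp p
  exact Summable.of_norm_bounded (summable_inv_weight_sq_mul.mul_left K)
    fun q => hK q p (Metric.mem_ball_self one_pos)

lemma hasFDerivAt_bilinearMultiplier (hβ : SymbolBound β C) (hu : ContDiff ℝ (⊤ : ℕ∞) u)
    (hw : ContDiff ℝ (⊤ : ℕ∞) w) (hup : Periodic2pi u) (hwp : Periodic2pi w)
    (p : (Fin m → ℝ) × ℝ) :
    HasFDerivAt (bilinearMultiplier β u w) (∑' q, fderiv ℝ (multiplierTerm β u w q) p) p := by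
  obtain ⟨K, hK⟩ := exists_norm_fderiv_multiplierTerm_le hβ hu hw hup hwp p
  have hp := Metric.mem_ball_self (x := p) one_pos
  exact hasFDerivAt_tsum_of_isPreconnected (summable_inv_weight_sq_mul.mul_left K)
    Metric.isOpen_ball (convex_ball p 1).isPreconnected
    (fun q x _ => (hasFDerivAt_multiplierTerm β hu hw hup hwp q x).differentiableAt.hasFDerivAt)
    hK hp (summable_norm_multiplierTerm hβ hu hw hup hwp p).of_norm hp

lemma differentiable_bilinearMultiplier (hβ : SymbolBound β C) (hu : ContDiff ℝ (⊤ : ℕ∞) u)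
    (hw : ContDiff ℝ (⊤ : ℕ∞) w) (hup : Periodic2pi u) (hwp : Periodic2pi w) :
    Differentiable ℝ (bilinearMultiplier β u w) :=
  fun p => (hasFDerivAt_bilinearMultiplier hβ hu hw hup hwp p).differentiableAt

lemma fderiv_bilinearMultiplier_apply (hβ : SymbolBound β C) (hu : ContDiff ℝ (⊤ : ℕ∞) u)
    (hw : ContDiff ℝ (⊤ : ℕ∞) w) (hup : Periodic2pi u) (hwp : Periodic2pi w)
    (p v : (Fin m → ℝ) × ℝ) :
    fderiv ℝ (bilinearMultiplier β u w) p v =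
      bilinearMultiplier β (fun q => fderiv ℝ u q v) w p +
        bilinearMultiplier β u (fun q => fderiv ℝ w q v) p := by
  have happly := (ContinuousLinearMap.apply ℝ ℂ v).map_tsum
    (summable_fderiv_multiplierTerm hβ hu hw hup hwp p)
  simp only [ContinuousLinearMap.apply_apply, fderiv_multiplierTerm_apply β hu hw hup hwp]
    at happly
  rw [(hasFDerivAt_bilinearMultiplier hβ hu hw hup hwp p).fderiv, happly]
  exact Summable.tsum_add
    (summable_norm_multiplierTerm hβ (contDiff_fderiv_apply_const hu v) hw
      (hup.fderiv_apply v) hwp p).of_norm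
    (summable_norm_multiplierTerm hβ hu (contDiff_fderiv_apply_const hw v) hup
      (hwp.fderiv_apply v) p).of_norm

/-- The shear `(n, l) ↦ (n - l, l)`, which parametrises pairs of frequencies by their sum. -/
def frequencyShear : ℤ × ℤ ≃ ℤ × ℤ where
  toFun q := (q.1 - q.2, q.2)
  invFun q := (q.1 + q.2, q.2)
  left_inv q := by simp
  right_inv q := by simp

lemma tsum_eq_tsum_frequencyShear {F : Type*} [NormedAddCommGroup F] [CompleteSpace F]
    {f : ℤ × ℤ → F} (hf : Summable f) : ∑' q, f q = ∑' n, ∑' l, f (n - l, l) := by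
  rw [← frequencyShear.tsum_eq]
  exact (frequencyShear.summable_iff.2 hf).tsum_prod

lemma bilinearMultiplier_eq_tsum (hβ : SymbolBound β C) (hu : ContDiff ℝ (⊤ : ℕ∞) u)
    (hw : ContDiff ℝ (⊤ : ℕ∞) w) (hup : Periodic2pi u) (hwp : Periodic2pi w)
    (p : (Fin m → ℝ) × ℝ) :
    bilinearMultiplier β u w p = ∑' n, (∑' l, β (n - l) l *
      (fCoeff u p.1 (n - l) * fCoeff w p.1 l)) * character n p.2 := by
  rw [bilinearMultiplier, tsum_eq_tsum_frequencyShear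
    (summable_norm_multiplierTerm hβ hu hw hup hwp p).of_norm]
  refine tsum_congr fun n => ?_
  rw [← tsum_mul_right]
  refine tsum_congr fun l => ?_
  have hchar := character_add_left (n - l) l p.2
  rw [sub_add_cancel] at hchar
  rw [multiplierTerm, fourierMode, fourierMode, hchar]
  ring

lemma hasSum_integral_mul_bilinearMultiplier (hβ : SymbolBound β C)
    (hu : ContDiff ℝ (⊤ : ℕ∞) u) (hw : ContDiff ℝ (⊤ : ℕ∞) w) (hup : Periodic2pi u)
    (hwp : Periodic2pi w) (y : Fin m → ℝ) {G : ℝ → ℂ} (hG : Continuous G) :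
    HasSum (fun q : ℤ × ℤ => β q.1 q.2 * (fCoeff u y q.1 * fCoeff w y q.2) *
        ∫ θ in (0 : ℝ)..2 * Real.pi, G θ * character (q.1 + q.2) θ)
      (∫ θ in (0 : ℝ)..2 * Real.pi, G θ * bilinearMultiplier β u w (y, θ)) := by
  have hsummable (θ : ℝ) := summable_norm_multiplierTerm hβ hu hw hup hwp (y, θ)
  have hterm (q : ℤ × ℤ) (θ : ℝ) : G θ * multiplierTerm β u w q (y, θ) =
      β q.1 q.2 * (fCoeff u y q.1 * fCoeff w y q.2) * (G θ * character (q.1 + q.2) θ) := by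
    rw [multiplierTerm, fourierMode, fourierMode, character_add_left]
    ring
  simp only [← intervalIntegral.integral_const_mul, ← hterm]
  refine intervalIntegral.hasSum_integral_of_dominated_convergence
    (fun q θ => ‖G θ‖ * ‖multiplierTerm β u w q (y, 0)‖) (fun q => ?_)
    (fun q => .of_forall fun θ _ => ?_) (.of_forall fun θ _ => (hsummable 0).mul_left _) ?_
    (.of_forall fun θ _ => (hsummable θ).of_norm.hasSum.mul_left _)
  · simp only [hterm]
    exact Continuous.aestronglyMeasurable (by fun_prop)
  · rw [norm_mul, norm_multiplierTerm, norm_multiplierTerm]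
  · simp only [tsum_mul_left]
    exact Continuous.intervalIntegrable (by fun_prop) _ _

lemma fCoeff_bilinearMultiplier (hβ : SymbolBound β C) (hu : ContDiff ℝ (⊤ : ℕ∞) u)
    (hw : ContDiff ℝ (⊤ : ℕ∞) w) (hup : Periodic2pi u) (hwp : Periodic2pi w) (y : Fin m → ℝ)
    (n : ℤ) : fCoeff (bilinearMultiplier β u w) y n =
      ∑' l, β (n - l) l * (fCoeff u y (n - l) * fCoeff w y l) := by
  have hsum := hasSum_integral_mul_bilinearMultiplier hβ hu hw hup hwp y (continuous_character (-n))
  simp only [← character_add_left, integral_character] at hsum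
  have hpi : (Real.pi : ℂ) ≠ 0 := by exact_mod_cast Real.pi_ne_zero
  simp only [fCoeff_eq_integral_character (bilinearMultiplier β u w), mul_comm _ (character (-n) _)]
  rw [← hsum.tsum_eq, tsum_eq_tsum_frequencyShear hsum.summable, tsum_eq_single n]
  · simp only [sub_add_cancel, neg_add_cancel, if_true, tsum_mul_right]
    field_simp
  · intro n' hn'
    simp [neg_add_eq_zero, hn'.symm]

lemma SymbolBound.sign_mul (hβ : SymbolBound β C) :
    SymbolBound (fun k l => -Complex.I * ((k + l).sign : ℂ) * β k l) C := by
  intro k l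
  have hsign (n : ℤ) : ‖(n.sign : ℂ)‖ ≤ 1 := by
    rcases Int.sign_trichotomy n with h | h | h <;> simp [h]
  rw [norm_mul, norm_mul, norm_neg, Complex.norm_I, one_mul]
  exact (mul_le_of_le_one_left (norm_nonneg _) (hsign _)).trans (hβ k l)

lemma Hil_bilinearMultiplier (hβ : SymbolBound β C) (hu : ContDiff ℝ (⊤ : ℕ∞) u)
    (hw : ContDiff ℝ (⊤ : ℕ∞) w) (hup : Periodic2pi u) (hwp : Periodic2pi w) :
    Hil (bilinearMultiplier β u w) =
      bilinearMultiplier (fun k l => -Complex.I * ((k + l).sign : ℂ) * β k l) u w := by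
  funext p
  rw [bilinearMultiplier_eq_tsum hβ.sign_mul hu hw hup hwp, Hil]
  refine tsum_congr fun n => ?_
  rw [fCoeff_bilinearMultiplier hβ hu hw hup hwp, ← tsum_mul_left, character]
  simp only [sub_add_cancel, mul_assoc]

/-- The symbol of the operator `Bil c₀ b`. -/
def bilSymbol (c₀ : ℂ) (b : ℤ → ℤ → ℤ → ℂ) (k l : ℤ) : ℂ :=
  -(1 / (4 * (Real.pi : ℂ) * c₀)) * b (-(k + l)) k l

variable {b : ℤ → ℤ → ℤ → ℂ}

lemma symbolBound_bilSymbol (c₀ : ℂ) (hb : KernelBound b C) :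
    SymbolBound (bilSymbol c₀ b) (C / (4 * Real.pi * ‖c₀‖)) := by
  intro k l
  have hC : 0 ≤ C := by simpa using (norm_nonneg _).trans (hb 1 1 1)
  have hpi := Real.pi_pos
  have hkernel : ‖b (-(k + l)) k l‖ ≤ C * (weight k * weight l) := by
    refine (hb _ _ _).trans ?_
    gcongr
    calc _ ≤ |((k * l : ℤ) : ℝ)| := (min_le_left _ _).trans (min_le_right _ _)
      _ = |(k : ℝ)| * |(l : ℝ)| := by push_cast; exact abs_mul _ _
      _ ≤ weight k * weight l := by
        unfold weight
        gcongr <;> linarith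
  calc ‖bilSymbol c₀ b k l‖ = 1 / (4 * Real.pi * ‖c₀‖) * ‖b (-(k + l)) k l‖ := by
        simp [bilSymbol, abs_of_pos hpi]
    _ ≤ 1 / (4 * Real.pi * ‖c₀‖) * (C * (weight k * weight l)) := by gcongr
    _ = C / (4 * Real.pi * ‖c₀‖) * (weight k * weight l) := by ring

lemma Bil_eq_bilinearMultiplier (c₀ : ℂ) (hb : KernelBound b C) (hu : ContDiff ℝ (⊤ : ℕ∞) u)
    (hw : ContDiff ℝ (⊤ : ℕ∞) w) (hup : Periodic2pi u) (hwp : Periodic2pi w) :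
    Bil c₀ b u w = bilinearMultiplier (bilSymbol c₀ b) u w := by
  funext p
  rw [bilinearMultiplier_eq_tsum (symbolBound_bilSymbol c₀ hb) hu hw hup hwp, Bil]
  refine tsum_congr fun n => ?_
  rw [← tsum_mul_left, character]
  simp only [bilSymbol, sub_add_cancel, mul_assoc]

lemma Hil_Bil (c₀ : ℂ) (hb : KernelBound b C) (hu : ContDiff ℝ (⊤ : ℕ∞) u)
    (hw : ContDiff ℝ (⊤ : ℕ∞) w) (hup : Periodic2pi u) (hwp : Periodic2pi w) :
    Hil (Bil c₀ b u w) =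
      bilinearMultiplier (fun k l => -Complex.I * ((k + l).sign : ℂ) * bilSymbol c₀ b k l) u w := by
  rw [Bil_eq_bilinearMultiplier c₀ hb hu hw hup hwp,
    Hil_bilinearMultiplier (symbolBound_bilSymbol c₀ hb) hu hw hup hwp]

lemma Bil_comm (c₀ : ℂ) (hb : KernelSymm b) (u w : (Fin m → ℝ) × ℝ → ℂ) :
    Bil c₀ b u w = Bil c₀ b w u := by
  funext p
  refine tsum_congr fun n => ?_
  congr 2
  rw [← (Equiv.subLeft n).tsum_eq]
  refine tsum_congr fun l => ?_
  rw [Equiv.subLeft_apply, sub_sub_cancel, (hb (-n) l (n - l)).2, mul_right_comm]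

lemma differentiable_Bil (c₀ : ℂ) (hb : KernelBound b C) (hu : ContDiff ℝ (⊤ : ℕ∞) u)
    (hw : ContDiff ℝ (⊤ : ℕ∞) w) (hup : Periodic2pi u) (hwp : Periodic2pi w) :
    Differentiable ℝ (Bil c₀ b u w) := by
  rw [Bil_eq_bilinearMultiplier c₀ hb hu hw hup hwp]
  exact differentiable_bilinearMultiplier (symbolBound_bilSymbol c₀ hb) hu hw hup hwp

lemma fderiv_Bil_apply (c₀ : ℂ) (hb : KernelBound b C) (hu : ContDiff ℝ (⊤ : ℕ∞) u)
    (hw : ContDiff ℝ (⊤ : ℕ∞) w) (hup : Periodic2pi u) (hwp : Periodic2pi w)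
    (p v : (Fin m → ℝ) × ℝ) :
    fderiv ℝ (Bil c₀ b u w) p v =
      Bil c₀ b (fun q => fderiv ℝ u q v) w p + Bil c₀ b u (fun q => fderiv ℝ w q v) p := by
  rw [Bil_eq_bilinearMultiplier c₀ hb hu hw hup hwp,
    fderiv_bilinearMultiplier_apply (symbolBound_bilSymbol c₀ hb) hu hw hup hwp,
    Bil_eq_bilinearMultiplier c₀ hb (contDiff_fderiv_apply_const hu v) hw
      (hup.fderiv_apply v) hwp,
    Bil_eq_bilinearMultiplier c₀ hb hu (contDiff_fderiv_apply_const hw v) hup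
      (hwp.fderiv_apply v)]

end BilinearMultiplier

/-! ### The trilinear form on a fibre -/

section TrilinearForm

/-- The involution `(k, l) ↦ (-(k + l), l)` exchanging the first two entries of the zero-sum triple
`(-(k + l), k, l)`. -/
def frequencyReflection : ℤ × ℤ ≃ ℤ × ℤ where
  toFun q := (-(q.1 + q.2), q.2)
  invFun q := (-(q.1 + q.2), q.2)
  left_inv q := by simp
  right_inv q := by simp

/-- The summand of the trilinear form `∑ sgn(k + l) b(-(k + l), k, l) a(k) c(l) a(-(k + l))`. -/
def trilinearTerm (b : ℤ → ℤ → ℤ → ℂ) (a c : ℤ → ℂ) (q : ℤ × ℤ) : ℂ :=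
  ((q.1 + q.2).sign : ℂ) * b (-(q.1 + q.2)) q.1 q.2 * (a q.1 * c q.2 * a (-(q.1 + q.2)))

variable {b : ℤ → ℤ → ℤ → ℂ} {C : ℝ}

lemma KernelSymm.trilinearTerm_add_reflection (hb : KernelSymm b) (a c : ℤ → ℂ) (q : ℤ × ℤ) :
    trilinearTerm b a c q + trilinearTerm b a c (frequencyReflection q) =
      (((q.1 + q.2).sign - q.1.sign : ℤ) : ℂ) * b (-(q.1 + q.2)) q.1 q.2 *
        (a q.1 * c q.2 * a (-(q.1 + q.2))) := by
  have hreflect : -(q.1 + q.2) + q.2 = -q.1 := by ring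
  simp only [trilinearTerm, frequencyReflection, Equiv.coe_fn_mk, hreflect, neg_neg, Int.sign_neg,
    (hb q.1 _ _).1]
  push_cast
  ring

/-- If `j` and `k` have opposite signs then `|j|` and `|k|` are at most `|j - k|`. -/
lemma abs_sign_sub_sign_mul_le (j k : ℤ) : |j.sign - k.sign| * |j * k| ≤ 2 * (j - k) ^ 2 := by
  rcases lt_trichotomy (j * k) 0 with hneg | hzero | hpos
  · have hsign : |j.sign - k.sign| ≤ 2 := by
      rcases j.sign_trichotomy with hj | hj | hj <;> rcases k.sign_trichotomy with hk | hk | hk <;>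
        norm_num [hj, hk]
    rw [abs_of_neg hneg]
    nlinarith [sq_nonneg (j + k)]
  · rw [hzero, abs_zero, mul_zero]
    positivity
  · have hsign : j.sign = k.sign := by
      rcases mul_pos_iff.1 hpos with ⟨hj, hk⟩ | ⟨hj, hk⟩
      · rw [Int.sign_eq_one_of_pos hj, Int.sign_eq_one_of_pos hk]
      · rw [Int.sign_eq_neg_one_of_neg hj, Int.sign_eq_neg_one_of_neg hk]
    rw [hsign, sub_self, abs_zero, zero_mul]
    positivity

lemma KernelBound.norm_sign_sub_sign_mul_le (hb : KernelBound b C) (k l : ℤ) :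
    ‖(((k + l).sign - k.sign : ℤ) : ℂ) * b (-(k + l)) k l‖ ≤ 2 * C * (l : ℝ) ^ 2 := by
  have hC : 0 ≤ C := by simpa using (norm_nonneg _).trans (hb 1 1 1)
  have hkernel : ‖b (-(k + l)) k l‖ ≤ C * |(((k + l) * k : ℤ) : ℝ)| := by
    refine (hb _ _ _).trans ?_
    gcongr
    refine (min_le_left _ _).trans ((min_le_left _ _).trans_eq ?_)
    rw [neg_mul, Int.cast_neg, abs_neg]
  have hsign : |(((k + l).sign - k.sign : ℤ) : ℝ)| * |(((k + l) * k : ℤ) : ℝ)| ≤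
      2 * (l : ℝ) ^ 2 := by
    have := abs_sign_sub_sign_mul_le (k + l) k
    rw [add_sub_cancel_left] at this
    exact_mod_cast this
  rw [norm_mul, Complex.norm_intCast]
  calc _ ≤ |(((k + l).sign - k.sign : ℤ) : ℝ)| * (C * |(((k + l) * k : ℤ) : ℝ)|) := by gcongr
    _ = C * (|(((k + l).sign - k.sign : ℤ) : ℝ)| * |(((k + l) * k : ℤ) : ℝ)|) := by ring
    _ ≤ C * (2 * (l : ℝ) ^ 2) := by gcongr
    _ = 2 * C * (l : ℝ) ^ 2 := by ring

lemma norm_trilinearTerm_add_reflection_le (hsymm : KernelSymm b) (hb : KernelBound b C)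
    (a c : ℤ → ℂ) (q : ℤ × ℤ) :
    ‖trilinearTerm b a c q + trilinearTerm b a c (frequencyReflection q)‖ ≤
      C * (‖a q.1‖ ^ 2 * ((q.2 : ℝ) ^ 2 * ‖c q.2‖)) +
        C * (‖a (-(q.1 + q.2))‖ ^ 2 * ((q.2 : ℝ) ^ 2 * ‖c q.2‖)) := by
  have hC : 0 ≤ C := by simpa using (norm_nonneg _).trans (hb 1 1 1)
  rw [hsymm.trilinearTerm_add_reflection, norm_mul, norm_mul (a q.1 * c q.2), norm_mul (a q.1)]
  calc _ ≤ 2 * C * (q.2 : ℝ) ^ 2 * (‖a q.1‖ * ‖c q.2‖ * ‖a (-(q.1 + q.2))‖) :=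
        mul_le_mul_of_nonneg_right (hb.norm_sign_sub_sign_mul_le q.1 q.2) (by positivity)
    _ = C * ((q.2 : ℝ) ^ 2 * ‖c q.2‖) * (2 * ‖a q.1‖ * ‖a (-(q.1 + q.2))‖) := by ring
    _ ≤ C * ((q.2 : ℝ) ^ 2 * ‖c q.2‖) * (‖a q.1‖ ^ 2 + ‖a (-(q.1 + q.2))‖ ^ 2) := by
        gcongr
        exact two_mul_le_add_sq _ _
    _ = _ := by ring

theorem norm_tsum_trilinearTerm_le (hsymm : KernelSymm b) (hb : KernelBound b C) {a c : ℤ → ℂ}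
    (ha : Summable fun n => ‖a n‖ ^ 2) (hc : Summable fun n : ℤ => (n : ℝ) ^ 2 * ‖c n‖)
    (hac : Summable (trilinearTerm b a c)) :
    ‖∑' q, trilinearTerm b a c q‖ ≤ C * (∑' n, ‖a n‖ ^ 2) * ∑' n : ℤ, (n : ℝ) ^ 2 * ‖c n‖ := by
  set R : ℤ × ℤ → ℝ := fun q => C * (‖a q.1‖ ^ 2 * ((q.2 : ℝ) ^ 2 * ‖c q.2‖))
  have hmajorant : HasSum R (C * ((∑' n, ‖a n‖ ^ 2) * ∑' n : ℤ, (n : ℝ) ^ 2 * ‖c n‖)) :=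
    (ha.hasSum.mul hc.hasSum (ha.mul_of_nonneg hc (fun _ => by positivity)
      (fun _ => by positivity))).mul_left C
  have hsymmetrized : 2 * ∑' q, trilinearTerm b a c q =
      ∑' q, (trilinearTerm b a c q + trilinearTerm b a c (frequencyReflection q)) := by
    have hreflected : Summable fun q => trilinearTerm b a c (frequencyReflection q) :=
      frequencyReflection.summable_iff.2 hac
    rw [hac.tsum_add hreflected, frequencyReflection.tsum_eq (trilinearTerm b a c), two_mul]
  have hbound := tsum_of_norm_bounded
    (hmajorant.add (frequencyReflection.hasSum_iff.2 hmajorant))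
    (norm_trilinearTerm_add_reflection_le hsymm hb a c)
  rw [← hsymmetrized, norm_mul, Complex.norm_two] at hbound
  linarith

end TrilinearForm

section FibreBound

variable {m : ℕ} {g : (Fin m → ℝ) × ℝ → ℂ}

lemma fCoeff_eq_fourierCoeffOn (g : (Fin m → ℝ) × ℝ → ℂ) (y : Fin m → ℝ) (n : ℤ) :
    fCoeff g y n = fourierCoeffOn Real.two_pi_pos (fun θ => g (y, θ)) n := by
  have hpi : (Real.pi : ℂ) ≠ 0 := by exact_mod_cast Real.pi_ne_zero
  have hchar (θ : ℝ) :
      fourier (-n) (θ : AddCircle (2 * Real.pi - 0)) • g (y, θ) = g (y, θ) * character (-n) θ := by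
    rw [fourier_coe_apply, smul_eq_mul, mul_comm, character]
    congr 2
    push_cast
    field_simp
    ring
  rw [fourierCoeffOn_eq_integral, fCoeff_eq_integral_character]
  simp only [hchar, Complex.real_smul]
  push_cast
  rw [sub_zero]

lemma hasSum_norm_fCoeff_sq (hg : Continuous g) (y : Fin m → ℝ) :
    HasSum (fun n => ‖fCoeff g y n‖ ^ 2)
      ((2 * Real.pi)⁻¹ * ∫ θ in (0 : ℝ)..2 * Real.pi, ‖g (y, θ)‖ ^ 2) := by
  have hfibre : Continuous fun θ => g (y, θ) := by fun_prop
  have hmemLp : MemLp (fun θ => g (y, θ)) 2 (volume.restrict (Set.Ioc 0 (2 * Real.pi))) := by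
    obtain ⟨K, hK⟩ := (isCompact_Icc (a := (0 : ℝ))
      (b := 2 * Real.pi)).exists_bound_of_continuousOn hfibre.continuousOn
    exact MemLp.of_bound hfibre.aestronglyMeasurable K
      (ae_restrict_of_forall_mem measurableSet_Ioc fun θ hθ => hK θ (Set.Ioc_subset_Icc_self hθ))
  simpa only [← fCoeff_eq_fourierCoeffOn, sub_zero, smul_eq_mul] using
    hasSum_sq_fourierCoeffOn Real.two_pi_pos hmemLp

lemma summable_sq_mul_norm_fCoeff (hg : ContDiff ℝ (⊤ : ℕ∞) g) (hper : Periodic2pi g)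
    (y : Fin m → ℝ) : Summable fun n : ℤ => (n : ℝ) ^ 2 * ‖fCoeff g y n‖ := by
  obtain ⟨K, hK⟩ := exists_norm_fCoeff_le_of_isCompact hg hper (isCompact_singleton (x := y)) 4
  refine Summable.of_nonneg_of_le (fun n => by positivity) (fun n => ?_)
    (summable_inv_weight_sq.mul_left K)
  have hweight := weight_pos n
  have hnonneg : 0 ≤ K / weight n ^ 4 := (norm_nonneg _).trans (hK y rfl n)
  calc (n : ℝ) ^ 2 * ‖fCoeff g y n‖ ≤ weight n ^ 2 * (K / weight n ^ 4) := by
        rw [← sq_abs (n : ℝ)]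
        gcongr
        · unfold weight
          linarith
        · exact hK y rfl n
    _ = K * (weight n ^ 2)⁻¹ := by field_simp

lemma integral_mul_character (g : (Fin m → ℝ) × ℝ → ℂ) (y : Fin m → ℝ) (n : ℤ) :
    ∫ θ in (0 : ℝ)..2 * Real.pi, g (y, θ) * character n θ = 2 * Real.pi * fCoeff g y (-n) := by
  have hpi : (Real.pi : ℂ) ≠ 0 := by exact_mod_cast Real.pi_ne_zero
  rw [fCoeff_eq_integral_character, neg_neg]
  field_simp

variable {u w : (Fin m → ℝ) × ℝ → ℂ} {b : ℤ → ℤ → ℤ → ℂ} {C : ℝ}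

lemma hasSum_integral_mul_Hil_Bil (c₀ : ℂ) (hb : KernelBound b C) (hu : ContDiff ℝ (⊤ : ℕ∞) u)
    (hw : ContDiff ℝ (⊤ : ℕ∞) w) (hup : Periodic2pi u) (hwp : Periodic2pi w) (y : Fin m → ℝ) :
    HasSum (fun q => Complex.I / (2 * c₀) * trilinearTerm b (fCoeff u y) (fCoeff w y) q)
      (∫ θ in (0 : ℝ)..2 * Real.pi, u (y, θ) * Hil (Bil c₀ b u w) (y, θ)) := by
  have hpi : (Real.pi : ℂ) ≠ 0 := by exact_mod_cast Real.pi_ne_zero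
  have hcont := hu.continuous
  have hsum := hasSum_integral_mul_bilinearMultiplier (symbolBound_bilSymbol c₀ hb).sign_mul hu hw
    hup hwp y (G := fun θ => u (y, θ)) (by fun_prop)
  rw [Hil_Bil c₀ hb hu hw hup hwp]
  refine hsum.congr_fun fun q => ?_
  rw [integral_mul_character, trilinearTerm, bilSymbol]
  field_simp
  ring

lemma norm_integral_mul_Hil_Bil_le {c₀ : ℂ} (hc₀ : c₀ ≠ 0) (hsymm : KernelSymm b)
    (hb : KernelBound b C) (hu : ContDiff ℝ (⊤ : ℕ∞) u) (hw : ContDiff ℝ (⊤ : ℕ∞) w)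
    (hup : Periodic2pi u) (hwp : Periodic2pi w) (y : Fin m → ℝ) :
    ‖∫ θ in (0 : ℝ)..2 * Real.pi, u (y, θ) * Hil (Bil c₀ b u w) (y, θ)‖ ≤
      C / (4 * Real.pi * ‖c₀‖) * (∑' n : ℤ, (n : ℝ) ^ 2 * ‖fCoeff w y n‖) *
        ∫ θ in (0 : ℝ)..2 * Real.pi, ‖u (y, θ)‖ ^ 2 := by
  have hsum := hasSum_integral_mul_Hil_Bil c₀ hb hu hw hup hwp y
  have hparseval := hasSum_norm_fCoeff_sq hu.continuous y
  have hfactor : Complex.I / (2 * c₀) ≠ 0 := by simp [hc₀]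
  have hbound := norm_tsum_trilinearTerm_le hsymm hb hparseval.summable
    (summable_sq_mul_norm_fCoeff hw hwp y) ((summable_mul_left_iff hfactor).1 hsum.summable)
  rw [← hsum.tsum_eq, tsum_mul_left, norm_mul, norm_div, Complex.norm_I, norm_mul, Complex.norm_two]
  rw [hparseval.tsum_eq] at hbound
  have hnorm : 0 < ‖c₀‖ := norm_pos_iff.2 hc₀
  refine (mul_le_mul_of_nonneg_left hbound (by positivity)).trans_eq ?_
  field_simp
  ring

end FibreBound

/-! ### A pointwise bound by averaged derivatives -/

section Sobolev

variable {E F : Type*} [NormedAddCommGroup E] [NormedSpace ℝ E]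
  [NormedAddCommGroup F] [NormedSpace ℝ F]

lemma iteratedDeriv_comp_add_smul {f : E → F} {v : E} (hf : ∀ k, Differentiable ℝ (dIter v k f))
    (y : E) (k : ℕ) :
    iteratedDeriv k (fun t : ℝ => f (y + t • v)) = fun t => dIter v k f (y + t • v) := by
  induction k with
  | zero => rw [iteratedDeriv_zero]; rfl
  | succ k ih =>
    funext t
    have hline : HasDerivAt (fun t : ℝ => y + t • v) v t := by
      simpa using ((hasDerivAt_id t).smul_const v).const_add y
    rw [iteratedDeriv_succ, ih]
    exact ((hf k (y + t • v)).hasFDerivAt.comp_hasDerivAt t hline).deriv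

lemma contDiff_comp_add_smul {f : E → F} {v : E} (hf : ∀ k, Differentiable ℝ (dIter v k f))
    (y : E) : ContDiff ℝ (⊤ : ℕ∞) fun t : ℝ => f (y + t • v) := by
  refine contDiff_of_differentiable_iteratedDeriv fun k _ => ?_
  rw [iteratedDeriv_comp_add_smul hf]
  exact (hf k).comp (by fun_prop)

lemma norm_le_of_norm_iteratedDeriv_le [CompleteSpace F] {φ : ℝ → F} {h : ℝ → ℝ} {s : ℕ}
    (hφ : ContDiff ℝ (s + 1 : ℕ) φ) (hh : Continuous h)
    (hbound : ∀ k ≤ s + 1, ∀ t, ‖iteratedDeriv k φ t‖ ≤ h t) :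
    ‖φ 0‖ ≤ (s + 1) * h 1 + ∫ t in (0 : ℝ)..1, t ^ s * h t := by
  have hfactorial (k : ℕ) : (1 : ℝ) ≤ k.factorial := by exact_mod_cast k.factorial_pos
  have hwithin {k : ℕ} (hk : k ≤ s + 1) {t : ℝ} (ht : t ∈ Set.uIcc (1 : ℝ) 0) :
      iteratedDerivWithin k φ (Set.uIcc 1 0) t = iteratedDeriv k φ t :=
    iteratedDerivWithin_eq_iteratedDeriv (uniqueDiffOn_uIcc one_ne_zero)
      ((hφ.of_le (by exact_mod_cast hk)).contDiffAt) ht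
  have hpolynomial : ‖taylorWithinEval φ s (Set.uIcc 1 0) 1 0‖ ≤ (s + 1) * h 1 := by
    rw [taylor_within_apply]
    refine (norm_sum_le_of_le (n := fun _ => h 1) _ fun k hk => ?_).trans_eq (by simp)
    have hk' : k ≤ s + 1 := (Finset.mem_range.1 hk).le
    rw [hwithin hk' Set.left_mem_uIcc, norm_smul]
    refine (mul_le_of_le_one_left (norm_nonneg _) ?_).trans (hbound k hk' 1)
    simpa using inv_le_one_of_one_le₀ (hfactorial k)
  have hremainder : ‖φ 0 - taylorWithinEval φ s (Set.uIcc 1 0) 1 0‖ ≤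
      ∫ t in (0 : ℝ)..1, t ^ s * h t := by
    rw [taylor_integral_remainder hφ.contDiffOn, intervalIntegral.integral_symm, norm_neg]
    refine intervalIntegral.norm_integral_le_of_norm_le zero_le_one
      (Filter.Eventually.of_forall fun t ht => ?_)
      (Continuous.intervalIntegrable (by fun_prop) _ _)
    have hpow : ‖(0 - t) ^ s / (s.factorial : ℝ)‖ ≤ t ^ s := by
      rw [norm_div, norm_pow, zero_sub, norm_neg, Real.norm_of_nonneg ht.1.le, Real.norm_natCast]
      exact div_le_self (pow_nonneg ht.1.le s) (hfactorial s)
    rw [hwithin le_rfl (Set.uIcc_comm (1 : ℝ) 0 ▸ Set.mem_uIcc_of_le ht.1.le ht.2), norm_smul]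
    exact mul_le_mul hpow (hbound _ le_rfl t) (norm_nonneg _) (pow_nonneg ht.1.le s)
  calc ‖φ 0‖ ≤ ‖taylorWithinEval φ s (Set.uIcc 1 0) 1 0‖ +
          ‖φ 0 - taylorWithinEval φ s (Set.uIcc 1 0) 1 0‖ := norm_le_norm_add_norm_sub' _ _
    _ ≤ _ := add_le_add hpolynomial hremainder

lemma sq_integral_le_integral_sq {Ω : Type*} [MeasurableSpace Ω] {P : Measure Ω}
    [IsProbabilityMeasure P] {g : Ω → ℝ} (hg : Integrable g P)
    (hg_sq : Integrable (fun x => g x ^ 2) P) : (∫ x, g x ∂P) ^ 2 ≤ ∫ x, g x ^ 2 ∂P :=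
  (even_two.convexOn_pow (𝕜 := ℝ)).map_integral_le (by fun_prop) isClosed_univ (by simp) hg hg_sq

lemma sq_intervalIntegral_zero_one_le {g : ℝ → ℝ} (hg : Continuous g) :
    (∫ t in (0 : ℝ)..1, g t) ^ 2 ≤ ∫ t in (0 : ℝ)..1, g t ^ 2 := by
  have hprob : IsProbabilityMeasure (volume.restrict (Set.Ioc (0 : ℝ) 1)) := ⟨by simp⟩
  simp only [intervalIntegral.integral_of_le zero_le_one]
  exact sq_integral_le_integral_sq hg.integrableOn_Ioc (hg.pow 2).integrableOn_Ioc

/-- Taylor's formula expands `f` around `y + v` and evaluates at `y`. -/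
lemma norm_sq_le_of_norm_dIter_le [CompleteSpace F] {f : E → F} {h : E → ℝ} {s : ℕ} {v : E}
    (hf : ∀ k, Differentiable ℝ (dIter v k f)) (hh : Continuous h)
    (hbound : ∀ k ≤ s + 1, ∀ x, ‖dIter v k f x‖ ≤ h x) (y : E) :
    ‖f y‖ ^ 2 ≤ 2 * (s + 1) ^ 2 * h (y + v) ^ 2 +
      2 * ∫ t in Set.Ioc (0 : ℝ) 1, (t ^ s * h (y + t • v)) ^ 2 := by
  have htaylor := norm_le_of_norm_iteratedDeriv_le (s := s)
    ((contDiff_comp_add_smul hf y).of_le (by exact_mod_cast le_top))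
    (h := fun t => h (y + t • v)) (by fun_prop) fun k hk t => by
      rw [iteratedDeriv_comp_add_smul hf]
      exact hbound k hk _
  have hjensen := sq_intervalIntegral_zero_one_le (g := fun t => t ^ s * h (y + t • v))
    (by fun_prop)
  simp only [zero_smul, add_zero, one_smul] at htaylor
  rw [← intervalIntegral.integral_of_le zero_le_one]
  calc ‖f y‖ ^ 2 ≤ _ := pow_le_pow_left₀ (norm_nonneg _) htaylor 2
    _ ≤ 2 * (((s + 1) * h (y + v)) ^ 2 + _ ^ 2) := add_sq_le
    _ ≤ 2 * (((s + 1) * h (y + v)) ^ 2 + ∫ t in (0 : ℝ)..1, (t ^ s * h (y + t • v)) ^ 2) := by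
        gcongr
    _ = _ := by ring

variable [FiniteDimensional ℝ E] [MeasurableSpace E] [BorelSpace E] {μ : Measure E}
  [μ.IsAddHaarMeasure] {h : E → ℝ} {s : ℕ} {B : Set E}

lemma setIntegral_sq_pow_mul_comp_smul_le (hint : Integrable (fun x => h x ^ 2) μ)
    (hs : Module.finrank ℝ E ≤ 2 * s) (y : E) {t : ℝ} (ht : t ∈ Set.Ioc 0 1) :
    ∫ v in B, (t ^ s * h (y + t • v)) ^ 2 ∂μ ≤ ∫ x, h x ^ 2 ∂μ := by
  obtain ⟨ht₀, ht₁⟩ := ht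
  have hdilated : Integrable (fun v => h (y + t • v) ^ 2) μ :=
    (integrable_comp_smul_iff μ (fun v => h (y + v) ^ 2) ht₀.ne').2 (hint.comp_add_left y)
  have hscale : ∫ v, h (y + t • v) ^ 2 ∂μ =
      (t ^ Module.finrank ℝ E)⁻¹ * ∫ x, h x ^ 2 ∂μ := by
    rw [Measure.integral_comp_smul_of_nonneg μ (fun v => h (y + v) ^ 2) t (hR := ht₀.le),
      integral_add_left_eq_self (fun v => h v ^ 2), smul_eq_mul]
  have hnonneg : 0 ≤ ∫ x, h x ^ 2 ∂μ := integral_nonneg fun x => sq_nonneg _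
  simp only [mul_pow, ← pow_mul, mul_comm s 2, integral_const_mul]
  calc _ ≤ t ^ (2 * s) * ((t ^ Module.finrank ℝ E)⁻¹ * ∫ x, h x ^ 2 ∂μ) := by
        rw [← hscale]
        exact mul_le_mul_of_nonneg_left
          (setIntegral_le_integral hdilated (.of_forall fun v => sq_nonneg _)) (by positivity)
    _ ≤ t ^ Module.finrank ℝ E * ((t ^ Module.finrank ℝ E)⁻¹ * ∫ x, h x ^ 2 ∂μ) := by
        gcongr ?_ * _
        exact pow_le_pow_of_le_one ht₀.le ht₁ hs
    _ = ∫ x, h x ^ 2 ∂μ := mul_inv_cancel_left₀ (pow_pos ht₀ _).ne' _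

lemma integrable_prod_sq_pow_mul_comp_smul (hh : Continuous h) (hB : IsCompact B) (y : E) :
    Integrable (fun q : E × ℝ => (q.2 ^ s * h (y + q.2 • q.1)) ^ 2)
      ((μ.restrict B).prod (volume.restrict (Set.Ioc 0 1))) := by
  rw [Measure.prod_restrict]
  refine IntegrableOn.mono_set ?_ (Set.prod_mono le_rfl Set.Ioc_subset_Icc_self)
  exact ContinuousOn.integrableOn_compact (hB.prod isCompact_Icc) (by fun_prop)

lemma setIntegral_integral_sq_pow_mul_comp_smul_le (hh : Continuous h)
    (hint : Integrable (fun x => h x ^ 2) μ) (hs : Module.finrank ℝ E ≤ 2 * s)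
    (hB : IsCompact B) (y : E) :
    ∫ v in B, (∫ t in Set.Ioc (0 : ℝ) 1, (t ^ s * h (y + t • v)) ^ 2) ∂μ ≤ ∫ x, h x ^ 2 ∂μ := by
  rw [integral_integral_swap (integrable_prod_sq_pow_mul_comp_smul hh hB y)]
  refine (Real.le_norm_self _).trans
    ((norm_setIntegral_le_of_norm_le_const (C := ∫ x, h x ^ 2 ∂μ) (by simp)
      fun t ht => ?_).trans_eq (by simp))
  rw [Real.norm_of_nonneg (integral_nonneg fun v => sq_nonneg _)]
  exact setIntegral_sq_pow_mul_comp_smul_le hint hs y ht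

theorem norm_sq_mul_measure_le_of_norm_dIter_le [CompleteSpace F] {f : E → F}
    (hf : ∀ v k, Differentiable ℝ (dIter v k f)) (hh : Continuous h)
    (hint : Integrable (fun x => h x ^ 2) μ) (hs : Module.finrank ℝ E ≤ 2 * s)
    (hB : IsCompact B) (hbound : ∀ v ∈ B, ∀ k ≤ s + 1, ∀ x, ‖dIter v k f x‖ ≤ h x) (y : E) :
    ‖f y‖ ^ 2 * μ.real B ≤ 2 * ((s + 1) ^ 2 + 1) * ∫ x, h x ^ 2 ∂μ := by
  set R : E → ℝ := fun v => ∫ t in Set.Ioc (0 : ℝ) 1, (t ^ s * h (y + t • v)) ^ 2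
  have htranslate : Integrable (fun v => h (y + v) ^ 2) μ := hint.comp_add_left y
  have hR : IntegrableOn R B μ :=
    (integrable_prod_sq_pow_mul_comp_smul hh hB y).integral_prod_left
  calc ‖f y‖ ^ 2 * μ.real B = ∫ _ in B, ‖f y‖ ^ 2 ∂μ := by
        rw [setIntegral_const, smul_eq_mul, mul_comm]
    _ ≤ ∫ v in B, (2 * (s + 1) ^ 2 * h (y + v) ^ 2 + 2 * R v) ∂μ :=
        setIntegral_mono_on (integrableOn_const hB.measure_lt_top.ne)
          (Integrable.fun_add (htranslate.integrableOn.const_mul _) (hR.const_mul _))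
          hB.measurableSet fun v hv => norm_sq_le_of_norm_dIter_le (hf v) hh (hbound v hv) y
    _ = 2 * (s + 1) ^ 2 * ∫ v in B, h (y + v) ^ 2 ∂μ + 2 * ∫ v in B, R v ∂μ := by
        rw [integral_add (htranslate.integrableOn.const_mul _) (hR.const_mul _),
          integral_const_mul, integral_const_mul]
    _ ≤ 2 * (s + 1) ^ 2 * ∫ x, h x ^ 2 ∂μ + 2 * ∫ x, h x ^ 2 ∂μ := by
        gcongr
        · exact (setIntegral_le_integral htranslate (.of_forall fun v => sq_nonneg _)).trans_eq
            (integral_add_left_eq_self (fun v => h v ^ 2) y)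
        · exact setIntegral_integral_sq_pow_mul_comp_smul_le hh hint hs hB y
    _ = _ := by ring

end Sobolev

/-! ### Mixed derivatives of Fourier coefficients -/

section MixedDerivatives

variable {m : ℕ} {w : (Fin m → ℝ) × ℝ → ℂ}

/-- The spatial derivative `∏_{i ∈ l} ∂_{y_i}^{α i}`; `spThDeriv` takes `l = List.finRange m`. -/
def spaceDeriv (l : List (Fin m)) (α : Fin m → ℕ) (w : (Fin m → ℝ) × ℝ → ℂ) :
    (Fin m → ℝ) × ℝ → ℂ :=
  (l.map fun i => dIter (F := ℂ) (Pi.single i (1 : ℝ), (0 : ℝ)) (α i)).foldr (fun op h => op h) w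

lemma spaceDeriv_cons (i : Fin m) (l : List (Fin m)) (α : Fin m → ℕ)
    (w : (Fin m → ℝ) × ℝ → ℂ) :
    spaceDeriv (i :: l) α w = dIter (Pi.single i 1, 0) (α i) (spaceDeriv l α w) := rfl

lemma spThDeriv_eq_dIter_spaceDeriv (α : Fin m → ℕ) (j : ℕ) (w : (Fin m → ℝ) × ℝ → ℂ) :
    spThDeriv α j w = dIter (0, 1) j (spaceDeriv (List.finRange m) α w) := rfl

lemma contDiff_spaceDeriv (hw : ContDiff ℝ (⊤ : ℕ∞) w) (l : List (Fin m)) (α : Fin m → ℕ) :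
    ContDiff ℝ (⊤ : ℕ∞) (spaceDeriv l α w) := by
  induction l with
  | nil => exact hw
  | cons i l ih => exact contDiff_dIter ih _ _

lemma Periodic2pi.spaceDeriv (hw : Periodic2pi w) (l : List (Fin m)) (α : Fin m → ℕ) :
    Periodic2pi (spaceDeriv l α w) := by
  induction l with
  | nil => exact hw
  | cons i l ih => exact ih.dIter _ _

lemma spaceDeriv_congr {l : List (Fin m)} {α β : Fin m → ℕ} (h : ∀ i ∈ l, α i = β i)
    (w : (Fin m → ℝ) × ℝ → ℂ) : spaceDeriv l α w = spaceDeriv l β w := by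
  induction l with
  | nil => rfl
  | cons i l ih =>
    rw [spaceDeriv_cons, spaceDeriv_cons, h i (by simp), ih fun j hj => h j (by simp [hj])]

lemma fderiv_spaceDeriv_apply_single (hw : ContDiff ℝ (⊤ : ℕ∞) w) (α : Fin m → ℕ) {i : Fin m}
    {l : List (Fin m)} (hl : l.Nodup) (hi : i ∈ l) :
    (fun x => fderiv ℝ (spaceDeriv l α w) x (Pi.single i 1, 0)) =
      spaceDeriv l (α + Pi.single i 1) w := by
  induction l with
  | nil => simp at hi
  | cons a l ih =>
    obtain ⟨ha, hl⟩ := List.nodup_cons.1 hl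
    rw [spaceDeriv_cons, spaceDeriv_cons]
    rcases eq_or_ne i a with rfl | hia
    · have htail : spaceDeriv l (α + Pi.single i 1) w = spaceDeriv l α w :=
        spaceDeriv_congr (fun j hj => by simp [ne_of_mem_of_not_mem hj ha]) w
      rw [htail, Pi.add_apply, Pi.single_eq_same]
      rfl
    · have hα : (α + Pi.single i 1 : Fin m → ℕ) a = α a := by simp [hia.symm]
      rw [hα, ← ih hl ((List.mem_cons.1 hi).resolve_left hia),
        dIter_fderiv_apply (contDiff_spaceDeriv hw l α)]

lemma contDiff_spThDeriv (hw : ContDiff ℝ (⊤ : ℕ∞) w) (α : Fin m → ℕ) (j : ℕ) :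
    ContDiff ℝ (⊤ : ℕ∞) (spThDeriv α j w) :=
  contDiff_dIter (contDiff_spaceDeriv hw _ α) _ j

lemma fderiv_spThDeriv_apply_single (hw : ContDiff ℝ (⊤ : ℕ∞) w) (α : Fin m → ℕ) (j : ℕ)
    (i : Fin m) :
    (fun x => fderiv ℝ (spThDeriv α j w) x (Pi.single i 1, 0)) =
      spThDeriv (α + Pi.single i 1) j w := by
  rw [spThDeriv_eq_dIter_spaceDeriv, spThDeriv_eq_dIter_spaceDeriv,
    ← fderiv_spaceDeriv_apply_single hw α (List.nodup_finRange m) (List.mem_finRange i),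
    dIter_fderiv_apply (contDiff_spaceDeriv hw _ α)]

lemma fderiv_spThDeriv_apply (hw : ContDiff ℝ (⊤ : ℕ∞) w) (α : Fin m → ℕ) (j : ℕ)
    (v : Fin m → ℝ) :
    (fun x => fderiv ℝ (spThDeriv α j w) x (v, 0)) =
      fun x => ∑ i, v i • spThDeriv (α + Pi.single i 1) j w x := by
  have hv : (v, (0 : ℝ)) = ∑ i, v i • (Pi.single i (1 : ℝ), (0 : ℝ)) := by
    ext i
    · simp [Prod.fst_sum, Finset.sum_apply, Pi.single_apply]
    · simp [Prod.snd_sum]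
  funext x
  simp only [hv, map_sum, map_smul, ← fderiv_spThDeriv_apply_single hw]

lemma mdeg_add_single (α : Fin m → ℕ) (i : Fin m) : mdeg (α + Pi.single i 1) = mdeg α + 1 := by
  simp [mdeg, Finset.sum_add_distrib]

lemma norm_fCoeff_dIter_spThDeriv_le (hw : ContDiff ℝ (⊤ : ℕ∞) w) {x : Fin m → ℝ} {n : ℤ} {j : ℕ}
    (v : Fin m → ℝ) {K : ℝ} (k : ℕ) {α : Fin m → ℕ}
    (hK : ∀ β, mdeg β = mdeg α + k → ‖fCoeff (spThDeriv β j w) x n‖ ≤ K) :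
    ‖fCoeff (dIter (v, 0) k (spThDeriv α j w)) x n‖ ≤ (m * ‖v‖) ^ k * K := by
  induction k generalizing α with
  | zero => simpa [dIter] using hK α rfl
  | succ k ih =>
    have hexpand : fCoeff (dIter (v, 0) (k + 1) (spThDeriv α j w)) x n =
        ∑ i, v i • fCoeff (dIter (v, 0) k (spThDeriv (α + Pi.single i 1) j w)) x n := by
      rw [dIter_succ', fderiv_spThDeriv_apply hw,
        dIter_sum_smul _ _ (fun i => contDiff_spThDeriv hw _ j),
        fCoeff_sum_smul _ _ fun i => (contDiff_dIter (contDiff_spThDeriv hw _ j) _ k).continuous]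
    rw [hexpand]
    calc _ ≤ ∑ _i : Fin m, ‖v‖ * ((m * ‖v‖) ^ k * K) := by
          refine norm_sum_le_of_le _ fun i _ => ?_
          rw [norm_smul]
          refine mul_le_mul (norm_le_pi_norm v i) (ih fun β hβ => hK β ?_) (norm_nonneg _)
            (norm_nonneg _)
          rw [hβ, mdeg_add_single, add_assoc, add_comm 1 k]
      _ = (m * ‖v‖) ^ (k + 1) * K := by
          rw [Finset.sum_const, Finset.card_univ, Fintype.card_fin, nsmul_eq_mul]
          ring

/-- The multi-indices `(α, j)` of order at most `s`, over which `sqHm s` sums. -/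
abbrev MultiIndex (m s : ℕ) : Type := {q : (Fin m → ℕ) × ℕ // mdeg q.1 + q.2 ≤ s}

instance MultiIndex.instFinite (m s : ℕ) : Finite (MultiIndex m s) := by
  refine (((Set.Finite.pi' fun _ : Fin m => Set.finite_Iic s).prod
    (Set.finite_Iic s)).subset fun q hq => ⟨fun i => ?_, ?_⟩).to_subtype
  · exact (Finset.single_le_sum (fun _ _ => Nat.zero_le _) (Finset.mem_univ i)).trans
      ((Nat.le_add_right _ _).trans hq)
  · exact (Nat.le_add_left _ _).trans hq

instance MultiIndex.instFintype (m s : ℕ) : Fintype (MultiIndex m s) := Fintype.ofFinite _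

/-- The contribution of the frequency `n` on the fibre over `x` to the squared norm `sqHm s w`. -/
def modeEnergy (s : ℕ) (w : (Fin m → ℝ) × ℝ → ℂ) (n : ℤ) (x : Fin m → ℝ) : ℝ :=
  ∑ q : MultiIndex m s, ‖fCoeff (spThDeriv q.1.1 q.1.2 w) x n‖ ^ 2

lemma modeEnergy_nonneg (s : ℕ) (w : (Fin m → ℝ) × ℝ → ℂ) (n : ℤ) (x : Fin m → ℝ) :
    0 ≤ modeEnergy s w n x := Finset.sum_nonneg fun _ _ => sq_nonneg _

lemma continuous_modeEnergy (hw : ContDiff ℝ (⊤ : ℕ∞) w) (s : ℕ) (n : ℤ) :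
    Continuous (modeEnergy s w n) :=
  continuous_finsetSum _ fun _ _ =>
    (continuous_fCoeff (contDiff_spThDeriv hw _ _).continuous n).norm.pow 2

lemma norm_fCoeff_spThDeriv_le_sqrt_modeEnergy (w : (Fin m → ℝ) × ℝ → ℂ) {s : ℕ} {α : Fin m → ℕ}
    {j : ℕ} (h : mdeg α + j ≤ s) (x : Fin m → ℝ) (n : ℤ) :
    ‖fCoeff (spThDeriv α j w) x n‖ ≤ √(modeEnergy s w n x) := by
  have hle (f : MultiIndex m s → ℝ) (hf : ∀ q, 0 ≤ f q) (q : MultiIndex m s) : f q ≤ ∑ q, f q :=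
    Finset.single_le_sum (fun q _ => hf q) (Finset.mem_univ q)
  exact Real.le_sqrt_of_sq_le (hle (fun q => ‖fCoeff (spThDeriv q.1.1 q.1.2 w) x n‖ ^ 2)
    (fun _ => sq_nonneg _) ⟨(α, j), h⟩)

lemma norm_fCoeff_spThDeriv_zero_le (hw : ContDiff ℝ (⊤ : ℕ∞) w) (hper : Periodic2pi w)
    {s j : ℕ} {β : Fin m → ℕ} (hβ : mdeg β + j ≤ s) {n : ℤ} (hn : n ≠ 0) (x : Fin m → ℝ) :
    ‖fCoeff (spThDeriv β 0 w) x n‖ ≤ √(modeEnergy s w n x) / |(n : ℝ)| ^ j := by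
  rw [le_div_iff₀ (by positivity)]
  have hθ : fCoeff (spThDeriv β j w) x n =
      (Complex.I * n) ^ j * fCoeff (spThDeriv β 0 w) x n :=
    fCoeff_dIter_theta (contDiff_spaceDeriv hw _ β) (hper.spaceDeriv _ β) x n j
  have henergy := norm_fCoeff_spThDeriv_le_sqrt_modeEnergy w hβ x n
  rwa [hθ, norm_mul, norm_pow, norm_mul, Complex.norm_I, one_mul, Complex.norm_intCast,
    mul_comm] at henergy

/-- On the ball of radius `|n|⁻¹` each spatial derivative costs as much as one derivative in `θ`,
which is why all orders `k ≤ s` obey the same bound. -/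
lemma norm_dIter_fCoeff_le (hw : ContDiff ℝ (⊤ : ℕ∞) w) (hper : Periodic2pi w) {s k : ℕ}
    (hk : k ≤ s) {n : ℤ} (hn : n ≠ 0) {v : Fin m → ℝ} (hv : ‖v‖ ≤ |(n : ℝ)|⁻¹) (x : Fin m → ℝ) :
    ‖dIter v k (fun y => fCoeff w y n) x‖ ≤
      ((m + 1) / |(n : ℝ)|) ^ s * √(modeEnergy s w n x) := by
  have hmode := norm_fCoeff_dIter_spThDeriv_le hw (x := x) (n := n) (j := 0) v k (α := 0)
    (K := √(modeEnergy s w n x) / |(n : ℝ)| ^ (s - k)) fun β hβ =>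
      norm_fCoeff_spThDeriv_zero_le hw hper (by simp [mdeg] at hβ ⊢; omega) hn x
  rw [spThDeriv_zero] at hmode
  rw [dIter_fCoeff hw hper]
  calc _ ≤ (m * ‖v‖) ^ k * (√(modeEnergy s w n x) / |(n : ℝ)| ^ (s - k)) := hmode
    _ ≤ ((m + 1) * |(n : ℝ)|⁻¹) ^ k * (√(modeEnergy s w n x) / |(n : ℝ)| ^ (s - k)) := by
        gcongr
        linarith
    _ = (m + 1) ^ k * (√(modeEnergy s w n x) / |(n : ℝ)| ^ s) := by
        have hpow : |(n : ℝ)| ^ s = |(n : ℝ)| ^ k * |(n : ℝ)| ^ (s - k) := by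
          rw [← pow_add, Nat.add_sub_cancel' hk]
        rw [hpow, mul_pow, inv_pow]
        field_simp
    _ ≤ (m + 1) ^ s * (√(modeEnergy s w n x) / |(n : ℝ)| ^ s) := by
        gcongr
        linarith [m.cast_nonneg (α := ℝ)]
    _ = _ := by rw [div_pow]; ring

end MixedDerivatives

/-! ### Sobolev bound for the Fourier coefficients -/

section Strip

variable {m : ℕ}

lemma restrict_strip (m : ℕ) : (volume : Measure ((Fin m → ℝ) × ℝ)).restrict (strip m) =
    (volume : Measure (Fin m → ℝ)).prod (volume.restrict (Set.Ioc 0 (2 * Real.pi))) := by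
  have hstrip : strip m = Set.univ ×ˢ Set.Ioo 0 (2 * Real.pi) := by
    ext p
    simp [strip]
  rw [hstrip, Measure.volume_eq_prod, ← Measure.prod_restrict, Measure.restrict_univ,
    restrict_Ioo_eq_restrict_Ioc]

variable {F : Type*} [NormedAddCommGroup F]

lemma integrable_intervalIntegral_of_integrableOn_strip [NormedSpace ℝ F]
    {f : (Fin m → ℝ) × ℝ → F} (hf : IntegrableOn f (strip m)) :
    Integrable fun x => ∫ θ in (0 : ℝ)..2 * Real.pi, f (x, θ) := by
  rw [IntegrableOn, restrict_strip] at hf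
  simp only [intervalIntegral.integral_of_le Real.two_pi_pos.le]
  exact hf.integral_prod_left

lemma setIntegral_strip [NormedSpace ℝ F] {f : (Fin m → ℝ) × ℝ → F}
    (hf : IntegrableOn f (strip m)) :
    ∫ p in strip m, f p = ∫ x, ∫ θ in (0 : ℝ)..2 * Real.pi, f (x, θ) := by
  rw [IntegrableOn, restrict_strip] at hf
  simp only [restrict_strip, integral_prod _ hf,
    intervalIntegral.integral_of_le Real.two_pi_pos.le]

lemma integrableOn_strip_of_norm_le {f : (Fin m → ℝ) × ℝ → F} (hf : Continuous f) {K : ℝ}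
    (hK : ∀ p : (Fin m → ℝ) × ℝ, (1 + ‖p.1‖) ^ (m + 1) * ‖f p‖ ≤ K) :
    IntegrableOn f (strip m) := by
  have hdecay : Integrable fun x : Fin m → ℝ => (1 + ‖x‖) ^ (-((m + 1 : ℕ) : ℝ)) :=
    integrable_one_add_norm (by simp)
  rw [IntegrableOn, restrict_strip]
  refine (hdecay.mul_prod (integrable_const K)).mono' hf.aestronglyMeasurable
    (.of_forall fun p => ?_)
  rw [Real.rpow_neg (by positivity), Real.rpow_natCast, inv_mul_eq_div,
    le_div_iff₀ (by positivity), mul_comm]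
  exact hK p

end Strip

section Sobolev

variable {m : ℕ} {g w : (Fin m → ℝ) × ℝ → ℂ}

lemma SchwartzDecay.integrableOn_norm_spThDeriv_sq (hdecay : SchwartzDecay w)
    (hw : ContDiff ℝ (⊤ : ℕ∞) w) (α : Fin m → ℕ) (j : ℕ) :
    IntegrableOn (fun p => ‖spThDeriv α j w p‖ ^ 2) (strip m) := by
  obtain ⟨K, hK⟩ := hdecay (m + 1) α j
  obtain ⟨K₀, hK₀⟩ := hdecay 0 α j
  refine integrableOn_strip_of_norm_le ((contDiff_spThDeriv hw α j).continuous.norm.pow 2)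
    (K := K * K₀) fun p => ?_
  have hsup : ‖spThDeriv α j w p‖ ≤ K₀ := by simpa using hK₀ p
  rw [norm_pow, norm_norm, sq, ← mul_assoc]
  exact mul_le_mul (hK p) hsup (norm_nonneg _) ((by positivity : (0 : ℝ) ≤ _).trans (hK p))

lemma SchwartzDecay.integrableOn_norm_sq (hdecay : SchwartzDecay w)
    (hw : ContDiff ℝ (⊤ : ℕ∞) w) : IntegrableOn (fun p => ‖w p‖ ^ 2) (strip m) := by
  simpa [spThDeriv_zero, dIter] using hdecay.integrableOn_norm_spThDeriv_sq hw 0 0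

lemma integrable_norm_fCoeff_sq (hg : Continuous g)
    (hint : IntegrableOn (fun p => ‖g p‖ ^ 2) (strip m)) (n : ℤ) :
    Integrable fun x => ‖fCoeff g x n‖ ^ 2 := by
  refine ((integrable_intervalIntegral_of_integrableOn_strip hint).const_mul (2 * Real.pi)⁻¹).mono'
    ((continuous_fCoeff hg n).norm.pow 2).aestronglyMeasurable (.of_forall fun x => ?_)
  rw [Real.norm_of_nonneg (sq_nonneg _)]
  exact le_hasSum (hasSum_norm_fCoeff_sq hg x) n fun _ _ => sq_nonneg _

lemma sum_integral_norm_fCoeff_sq_le (hg : Continuous g)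
    (hint : IntegrableOn (fun p => ‖g p‖ ^ 2) (strip m)) (S : Finset ℤ) :
    ∑ n ∈ S, ∫ x, ‖fCoeff g x n‖ ^ 2 ≤ (2 * Real.pi)⁻¹ * sqL2 g := by
  have hcoeff (n : ℤ) := integrable_norm_fCoeff_sq hg hint n
  rw [← integral_finsetSum _ fun n _ => hcoeff n, sqL2, setIntegral_strip hint,
    ← integral_const_mul]
  exact integral_mono (integrable_finsetSum _ fun n _ => hcoeff n)
    ((integrable_intervalIntegral_of_integrableOn_strip hint).const_mul _)
    fun x => sum_le_hasSum S (fun _ _ => sq_nonneg _) (hasSum_norm_fCoeff_sq hg x)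

lemma integrable_norm_fCoeff_spThDeriv_sq (hw : ContDiff ℝ (⊤ : ℕ∞) w) (hdecay : SchwartzDecay w)
    (α : Fin m → ℕ) (j : ℕ) (n : ℤ) : Integrable fun x => ‖fCoeff (spThDeriv α j w) x n‖ ^ 2 :=
  integrable_norm_fCoeff_sq (contDiff_spThDeriv hw α j).continuous
    (hdecay.integrableOn_norm_spThDeriv_sq hw α j) n

lemma integrable_modeEnergy (hw : ContDiff ℝ (⊤ : ℕ∞) w) (hdecay : SchwartzDecay w) (s : ℕ)
    (n : ℤ) : Integrable (modeEnergy s w n) :=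
  integrable_finsetSum _ fun _ _ => integrable_norm_fCoeff_spThDeriv_sq hw hdecay _ _ n

lemma integral_modeEnergy (hw : ContDiff ℝ (⊤ : ℕ∞) w) (hdecay : SchwartzDecay w) (s : ℕ)
    (n : ℤ) : ∫ x, modeEnergy s w n x =
      ∑ q : MultiIndex m s, ∫ x, ‖fCoeff (spThDeriv q.1.1 q.1.2 w) x n‖ ^ 2 :=
  integral_finsetSum _ fun _ _ => integrable_norm_fCoeff_spThDeriv_sq hw hdecay _ _ n

lemma sum_integral_modeEnergy_le (hw : ContDiff ℝ (⊤ : ℕ∞) w) (hdecay : SchwartzDecay w) (s : ℕ)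
    (S : Finset ℤ) : ∑ n ∈ S, ∫ x, modeEnergy s w n x ≤ (2 * Real.pi)⁻¹ * sqHm s w := by
  simp only [integral_modeEnergy hw hdecay]
  rw [Finset.sum_comm, sqHm, tsum_fintype, Finset.mul_sum]
  exact Finset.sum_le_sum fun q _ => sum_integral_norm_fCoeff_sq_le
    (contDiff_spThDeriv hw q.1.1 q.1.2).continuous
    (hdecay.integrableOn_norm_spThDeriv_sq hw q.1.1 q.1.2) S

lemma pow_mul_norm_fCoeff_sq_le (hw : ContDiff ℝ (⊤ : ℕ∞) w) (hper : Periodic2pi w)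
    (hdecay : SchwartzDecay w) {s : ℕ} (hs : m ≤ 2 * s) {n : ℤ} (hn : n ≠ 0) (y : Fin m → ℝ) :
    |(n : ℝ)| ^ (2 * (s + 1)) * ‖fCoeff w y n‖ ^ 2 ≤
      2 * ((s + 1) ^ 2 + 1) * (m + 1) ^ (2 * (s + 1)) * |(n : ℝ)| ^ m *
        ∫ x, modeEnergy (s + 1) w n x := by
  set h : (Fin m → ℝ) → ℝ := fun x =>
    ((m + 1) / |(n : ℝ)|) ^ (s + 1) * √(modeEnergy (s + 1) w n x) with hh
  have hsq : (fun x => h x ^ 2) =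
      fun x => ((m + 1) / |(n : ℝ)|) ^ (2 * (s + 1)) * modeEnergy (s + 1) w n x := by
    funext x
    rw [hh, mul_pow, Real.sq_sqrt (modeEnergy_nonneg _ _ _ _), ← pow_mul, mul_comm 2]
  have hsobolev := norm_sq_mul_measure_le_of_norm_dIter_le (μ := volume) (h := h) (s := s)
    (B := Metric.closedBall 0 |(n : ℝ)|⁻¹) (fun v k => differentiable_dIter_fCoeff hw hper v n k)
    (continuous_const.mul (continuous_modeEnergy hw _ n).sqrt)
    (hsq ▸ (integrable_modeEnergy hw hdecay _ n).const_mul _) (by simpa using hs)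
    (isCompact_closedBall _ _)
    (fun v hv k hk x => norm_dIter_fCoeff_le hw hper hk hn (mem_closedBall_zero_iff.1 hv) x) y
  have hball : (|(n : ℝ)| ^ m)⁻¹ ≤
      volume.real (Metric.closedBall (0 : Fin m → ℝ) |(n : ℝ)|⁻¹) := by
    rw [measureReal_def, Real.volume_pi_closedBall _ (by positivity), Fintype.card_fin,
      ENNReal.toReal_ofReal (by positivity), mul_pow, inv_pow]
    exact le_mul_of_one_le_left (by positivity) (one_le_pow₀ one_le_two)
  rw [hsq, integral_const_mul, div_pow] at hsobolev
  have hpoint := (mul_le_mul_of_nonneg_left hball (sq_nonneg ‖fCoeff w y n‖)).trans hsobolev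
  field_simp at hpoint ⊢
  linarith

lemma sq_weight_mul_sq_mul_norm_fCoeff_le (hw : ContDiff ℝ (⊤ : ℕ∞) w) (hper : Periodic2pi w)
    (hdecay : SchwartzDecay w) {s : ℕ} (hs : m + 4 ≤ 2 * s) (y : Fin m → ℝ) (n : ℤ) :
    (weight n * ((n : ℝ) ^ 2 * ‖fCoeff w y n‖)) ^ 2 ≤
      4 * (2 * ((s + 1) ^ 2 + 1) * (m + 1) ^ (2 * (s + 1))) * ∫ x, modeEnergy (s + 1) w n x := by
  rcases eq_or_ne n 0 with rfl | hn
  · have henergy : 0 ≤ ∫ x, modeEnergy (s + 1) w 0 x :=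
      integral_nonneg (modeEnergy_nonneg (s + 1) w 0)
    simpa using mul_nonneg (by positivity) henergy
  have hone : 1 ≤ |(n : ℝ)| := by exact_mod_cast Int.one_le_abs hn
  have hweight : weight n ≤ 2 * |(n : ℝ)| := by unfold weight; linarith
  have hweight₀ := (weight_pos n).le
  refine le_of_mul_le_mul_left ?_ (by positivity : 0 < |(n : ℝ)| ^ m)
  calc |(n : ℝ)| ^ m * (weight n * ((n : ℝ) ^ 2 * ‖fCoeff w y n‖)) ^ 2
      ≤ |(n : ℝ)| ^ m * (2 * |(n : ℝ)| * ((n : ℝ) ^ 2 * ‖fCoeff w y n‖)) ^ 2 := by gcongr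
    _ = 4 * (|(n : ℝ)| ^ (m + 6) * ‖fCoeff w y n‖ ^ 2) := by
        rw [← sq_abs (n : ℝ)]
        ring
    _ ≤ 4 * (|(n : ℝ)| ^ (2 * (s + 1)) * ‖fCoeff w y n‖ ^ 2) := by
        gcongr
        omega
    _ ≤ _ := by
        have hmode := pow_mul_norm_fCoeff_sq_le hw hper hdecay (s := s) (by omega) hn y
        linarith

lemma sq_sum_le_tsum_inv_weight_mul (S : Finset ℤ) (a : ℤ → ℝ) :
    (∑ n ∈ S, a n) ^ 2 ≤ (∑' n, (weight n ^ 2)⁻¹) * ∑ n ∈ S, (weight n * a n) ^ 2 := by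
  calc (∑ n ∈ S, a n) ^ 2 = (∑ n ∈ S, (weight n)⁻¹ * (weight n * a n)) ^ 2 := by
        simp only [inv_mul_cancel_left₀ (weight_pos _).ne']
    _ ≤ (∑ n ∈ S, (weight n)⁻¹ ^ 2) * ∑ n ∈ S, (weight n * a n) ^ 2 :=
        Finset.sum_mul_sq_le_sq_mul_sq _ _ _
    _ ≤ _ := by
        simp only [inv_pow]
        gcongr
        exact summable_inv_weight_sq.sum_le_tsum S fun n _ => by positivity

lemma exists_tsum_sq_mul_norm_fCoeff_le {s : ℕ} (hs : m + 6 ≤ 2 * s) :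
    ∃ K ≥ 0, ∀ w : (Fin m → ℝ) × ℝ → ℂ, ContDiff ℝ (⊤ : ℕ∞) w → Periodic2pi w →
      SchwartzDecay w → ∀ y, ∑' n : ℤ, (n : ℝ) ^ 2 * ‖fCoeff w y n‖ ≤ K * √(sqHm s w) := by
  obtain ⟨s, rfl⟩ : ∃ t, s = t + 1 := ⟨s - 1, by omega⟩
  set L : ℝ := 4 * (2 * ((s + 1) ^ 2 + 1) * (m + 1) ^ (2 * (s + 1)))
  set A : ℝ := ∑' n : ℤ, (weight n ^ 2)⁻¹
  have hA : 0 ≤ A := tsum_nonneg fun n => by positivity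
  refine ⟨√(A * (L * (2 * Real.pi)⁻¹)), Real.sqrt_nonneg _, fun w hw hper hdecay y => ?_⟩
  refine Real.tsum_le_of_sum_le (fun n => by positivity) fun S => ?_
  rw [← Real.sqrt_mul (by positivity)]
  refine Real.le_sqrt_of_sq_le ?_
  calc (∑ n ∈ S, (n : ℝ) ^ 2 * ‖fCoeff w y n‖) ^ 2
      ≤ A * ∑ n ∈ S, (weight n * ((n : ℝ) ^ 2 * ‖fCoeff w y n‖)) ^ 2 :=
        sq_sum_le_tsum_inv_weight_mul S _
    _ ≤ A * ∑ n ∈ S, L * ∫ x, modeEnergy (s + 1) w n x := by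
        gcongr with n
        exact sq_weight_mul_sq_mul_norm_fCoeff_le hw hper hdecay (by omega) y n
    _ ≤ A * (L * ((2 * Real.pi)⁻¹ * sqHm (s + 1) w)) := by
        rw [← Finset.mul_sum]
        gcongr
        exact sum_integral_modeEnergy_le hw hdecay _ S
    _ = _ := by ring

end Sobolev

section EnergyEstimate

variable {m : ℕ} {u w : (Fin m → ℝ) × ℝ → ℂ} {b : ℤ → ℤ → ℤ → ℂ} {C : ℝ}

lemma continuous_Hil_Bil (c₀ : ℂ) (hb : KernelBound b C) (hu : ContDiff ℝ (⊤ : ℕ∞) u)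
    (hw : ContDiff ℝ (⊤ : ℕ∞) w) (hup : Periodic2pi u) (hwp : Periodic2pi w) :
    Continuous (Hil (Bil c₀ b u w)) := by
  rw [Hil_Bil c₀ hb hu hw hup hwp]
  exact (differentiable_bilinearMultiplier (symbolBound_bilSymbol c₀ hb).sign_mul
    hu hw hup hwp).continuous

lemma exists_norm_Hil_Bil_le (c₀ : ℂ) (hb : KernelBound b C) (hu : ContDiff ℝ (⊤ : ℕ∞) u)
    (hw : ContDiff ℝ (⊤ : ℕ∞) w) (hup : Periodic2pi u) (hwp : Periodic2pi w)
    (hud : SchwartzDecay u) (hwd : SchwartzDecay w) : ∃ M, ∀ p, ‖Hil (Bil c₀ b u w) p‖ ≤ M := by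
  obtain ⟨A, hA⟩ := hud.exists_norm_fCoeff_le hu hup 3
  obtain ⟨B, hB⟩ := hwd.exists_norm_fCoeff_le hw hwp 3
  rw [Hil_Bil c₀ hb hu hw hup hwp]
  exact ⟨_, fun p => norm_bilinearMultiplier_le (symbolBound_bilSymbol c₀ hb).sign_mul
    (hA p.1) (hB p.1) p.2⟩

lemma integrableOn_mul_Hil_Bil (c₀ : ℂ) (hb : KernelBound b C) (hu : ContDiff ℝ (⊤ : ℕ∞) u)
    (hw : ContDiff ℝ (⊤ : ℕ∞) w) (hup : Periodic2pi u) (hwp : Periodic2pi w)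
    (hud : SchwartzDecay u) (hwd : SchwartzDecay w) :
    IntegrableOn (fun p => u p * Hil (Bil c₀ b u w) p) (strip m) := by
  obtain ⟨K, hK⟩ := hud (m + 1) 0 0
  simp only [spThDeriv_zero, dIter] at hK
  obtain ⟨M, hM⟩ := exists_norm_Hil_Bil_le c₀ hb hu hw hup hwp hud hwd
  refine integrableOn_strip_of_norm_le (K := K * M)
    (hu.continuous.mul (continuous_Hil_Bil c₀ hb hu hw hup hwp)) fun p => ?_
  rw [norm_mul, ← mul_assoc]
  exact mul_le_mul (hK p) (hM p) (norm_nonneg _) ((by positivity : (0 : ℝ) ≤ _).trans (hK p))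

lemma exists_norm_setIntegral_mul_Hil_Bil_le {c₀ : ℂ} (hc₀ : c₀ ≠ 0) (hsymm : KernelSymm b)
    (hb : KernelBound b C) {s : ℕ} (hs : m + 6 ≤ 2 * s) :
    ∃ K > 0, ∀ u w : (Fin m → ℝ) × ℝ → ℂ, ContDiff ℝ (⊤ : ℕ∞) u → ContDiff ℝ (⊤ : ℕ∞) w →
      Periodic2pi u → Periodic2pi w → SchwartzDecay u → SchwartzDecay w →
      ‖∫ p in strip m, u p * Hil (Bil c₀ b u w) p‖ ≤ K * √(sqHm s w) * sqL2 u := by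
  obtain ⟨K, hK₀, hK⟩ := exists_tsum_sq_mul_norm_fCoeff_le hs
  have hC : 0 ≤ C := by simpa using (norm_nonneg _).trans (hb 1 1 1)
  refine ⟨C / (4 * Real.pi * ‖c₀‖) * K + 1, by positivity,
    fun u w hu hw hup hwp hud hwd => ?_⟩
  have hu₂ := hud.integrableOn_norm_sq hu
  have hfibre (y : Fin m → ℝ) :
      ‖∫ θ in (0 : ℝ)..2 * Real.pi, u (y, θ) * Hil (Bil c₀ b u w) (y, θ)‖ ≤
        (C / (4 * Real.pi * ‖c₀‖) * K + 1) * √(sqHm s w) *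
          ∫ θ in (0 : ℝ)..2 * Real.pi, ‖u (y, θ)‖ ^ 2 := by
    refine (norm_integral_mul_Hil_Bil_le hc₀ hsymm hb hu hw hup hwp y).trans ?_
    refine mul_le_mul_of_nonneg_right ?_
      (intervalIntegral.integral_nonneg Real.two_pi_pos.le fun _ _ => sq_nonneg _)
    calc _ ≤ C / (4 * Real.pi * ‖c₀‖) * (K * √(sqHm s w)) := by
          gcongr
          exact hK w hw hwp hwd y
      _ ≤ _ := by linarith [Real.sqrt_nonneg (sqHm s w)]
  rw [setIntegral_strip (integrableOn_mul_Hil_Bil c₀ hb hu hw hup hwp hud hwd), sqL2,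
    setIntegral_strip hu₂, ← integral_const_mul]
  exact norm_integral_le_of_norm_le
    ((integrable_intervalIntegral_of_integrableOn_strip hu₂).const_mul _) (.of_forall hfibre)

end EnergyEstimate

theorem bilinear_operator_properties_general (m : ℕ) {c₀ : ℂ} (hc₀ : c₀ ≠ 0)
    {b : ℤ → ℤ → ℤ → ℂ} {C : ℝ} (hsymm : KernelSymm b) (hb : KernelBound b C) :
    (∀ u w : (Fin m → ℝ) × ℝ → ℂ, ContDiff ℝ (⊤ : ℕ∞) u → ContDiff ℝ (⊤ : ℕ∞) w →
      Periodic2pi u → Periodic2pi w →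
      Bil c₀ b u w = Bil c₀ b w u ∧ Differentiable ℝ (Bil c₀ b u w) ∧
      ∀ p v, fderiv ℝ (Bil c₀ b u w) p v =
        Bil c₀ b (fun q => fderiv ℝ u q v) w p + Bil c₀ b u (fun q => fderiv ℝ w q v) p) ∧
    (∀ s : ℕ, ((m + 1 : ℕ) : ℝ) / 2 + 2 < s →
      ∃ K > 0, ∀ u w : (Fin m → ℝ) × ℝ → ℂ, ContDiff ℝ (⊤ : ℕ∞) u → ContDiff ℝ (⊤ : ℕ∞) w →
        Periodic2pi u → Periodic2pi w → SchwartzDecay u → SchwartzDecay w →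
        IntegrableOn (fun p => u p * Hil (Bil c₀ b u w) p) (strip m) ∧
        ‖∫ p in strip m, u p * Hil (Bil c₀ b u w) p‖ ≤ K * √(sqHm s w) * sqL2 u) := by
  refine ⟨fun u w hu hw hup hwp => ⟨Bil_comm c₀ hsymm u w,
    differentiable_Bil c₀ hb hu hw hup hwp, fderiv_Bil_apply c₀ hb hu hw hup hwp⟩, fun s hs => ?_⟩
  have horder : m + 5 < 2 * s := by
    have : (m : ℝ) + 5 < 2 * s := by push_cast at hs; linarith
    exact_mod_cast this
  obtain ⟨K, hK₀, hK⟩ := exists_norm_setIntegral_mul_Hil_Bil_le (m := m) hc₀ hsymm hb horder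
  exact ⟨K, hK₀, fun u w hu hw hup hwp hud hwd =>
    ⟨integrableOn_mul_Hil_Bil c₀ hb hu hw hup hwp hud hwd, hK u w hu hw hup hwp hud hwd⟩⟩

/-- **Properties of the bilinear operator `𝓑`** (Lemma `lembornesB`): `𝓑` is symmetric,
satisfies the Leibniz rule in `θ`, and obeys the commutator-type bound
`|∫ u 𝓗(𝓑(u,w)) dy dθ| ≤ C' ‖w‖_{H^{m₁}} ‖u‖²_{L²}` for every integer `m₁ > d/2 + 2`. -/
theorem bilinear_operator_properties (d : ℕ) (hd : 2 ≤ d)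
    (c₀ : ℂ) (hc₀ : c₀ ≠ 0) (b : ℤ → ℤ → ℤ → ℂ) (C : ℝ) (hC : 0 < C)
    (hsym : KernelSymm b) (hbnd : KernelBound b C) :
    (∀ u w : (Fin (d - 1) → ℝ) × ℝ → ℂ,
      ContDiff ℝ (⊤ : ℕ∞) u → ContDiff ℝ (⊤ : ℕ∞) w → RealValued u → RealValued w →
      Periodic2pi u → Periodic2pi w → SchwartzDecay u → SchwartzDecay w →
      (Bil c₀ b u w = Bil c₀ b w u) ∧
      (∀ p : (Fin (d - 1) → ℝ) × ℝ,
        fderiv ℝ (Bil c₀ b u w) p ((0 : Fin (d - 1) → ℝ), (1 : ℝ)) =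
          Bil c₀ b (fun q => fderiv ℝ u q ((0 : Fin (d - 1) → ℝ), (1 : ℝ))) w p +
            Bil c₀ b u (fun q => fderiv ℝ w q ((0 : Fin (d - 1) → ℝ), (1 : ℝ))) p)) ∧
    (∀ m₁ : ℕ, (d : ℝ) / 2 + 2 < (m₁ : ℝ) →
      ∃ C' > (0 : ℝ), ∀ u w : (Fin (d - 1) → ℝ) × ℝ → ℂ,
        ContDiff ℝ (⊤ : ℕ∞) u → ContDiff ℝ (⊤ : ℕ∞) w → RealValued u → RealValued w →
        Periodic2pi u → Periodic2pi w → SchwartzDecay u → SchwartzDecay w →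
        ‖∫ p in strip (d - 1), u p * Hil (Bil c₀ b u w) p‖ ≤
          C' * Real.sqrt (sqHm m₁ w) * sqL2 u) := by
  obtain ⟨m, rfl⟩ : ∃ m, d = m + 1 := ⟨d - 1, by omega⟩
  obtain ⟨halgebra, hestimate⟩ := bilinear_operator_properties_general m hc₀ hsym hbnd
  exact ⟨fun u w hu hw _ _ hup hwp _ _ =>
      (halgebra u w hu hw hup hwp).imp_right fun h p => h.2 p (0, 1),
    fun m₁ hm₁ => (hestimate m₁ hm₁).imp fun _ hK => hK.imp_right fun hK u w hu hw _ _ hup hwp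
      hud hwd => (hK u w hu hw hup hwp hud hwd).2⟩

end
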